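/- Asymptotic nilpotency in density of cellular automata is undecidable: there is no total computable function g from codes (n, f) (of radius-1 cellular automata Φ_{n,f}) to Bool such that g(n,f) = true if and only if Φ_{n,f} is asymptotically nilpotent in density. -/

import Mathlib

open Filter

/-- The radius-1 cellular automaton induced by a local rule `f`. -/
def caOfRule {n : ℕ} (f : Fin (n + 1) × Fin (n + 1) × Fin (n + 1) → Fin (n + 1)) :
    (ℤ → Fin (n + 1)) → (ℤ → Fin (n + 1)) :=
  fun x i => f (x (i - 1), x i, x (i + 1))

/-- The Besicovitch pseudometric on `α^ℤ`:
`d_B(x,y) = limsup_{m→∞} |{i ∈ [-m,m] : x_i ≠ y_i}| / (2m+1)`. -/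
noncomputable def besicovitchDist {α : Type} [DecidableEq α] (x y : ℤ → α) : ℝ :=
  Filter.limsup (fun m : ℕ =>
      (((Finset.Icc (-(m : ℤ)) (m : ℤ)).filter fun i => x i ≠ y i).card : ℝ) /
        (2 * (m : ℝ) + 1))
    Filter.atTop

/-!
Call a local rule spreading if a blank at a cell or at its right neighbour always produces a blank.
A spreading automaton is asymptotically nilpotent in density if and only if it has no immortal
configuration, that is, no orbit free of blanks: an immortal configuration has distance `1` from
`0^∞` forever, and if there is none, then by compactness every window of a certain size sees a blank
in bounded time, so that all configurations die out together. It therefore suffices to reduce the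
complement of the halting problem to the existence of immortal configurations.

Let the state of a cell consist of finitely many tracks, the track `v` being shifted by `v` cells
per unit of time, and let a cell become blank when it sees a violation of a local constraint. The
constraint of a space-time position then concerns the terms `g v (m + v * d)` of the tracks along
an arithmetic progression of common difference `d ≥ 0`, and a configuration is immortal if and only
if no progression violates the constraint.

The constraints force the tracks, up to translation and to any prescribed precision, to record for
a prime `p` the residues and the last nonzero digits in base `p` of the integers. Doing this for two
primes `p` and `q`, one places the tile of coordinates `i, j` of a quadrant on the integers of
`p`-adic valuation `i` and `q`-adic valuation `j`. Progressions whose difference has smaller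
valuation than their initial term pass to the next valuation between the indices `1` and `p`
(respectively `q`), so that the constraints can compare neighbouring tiles. The tiles carry the
space-time diagram of a universal machine, which exists exactly for the inputs on which the machine
does not halt. The tiles of the start configuration read the letters of the input off the rule, with
the help of a counter that is bounded by the length of the input; the number of states therefore
grows with the input, but the code of the rule is a primitive recursive function of it.
-/

namespace CellularAutomaton

open Function

/-! ### Spreading rules and immortal configurations -/

section Besicovitch

variable {α : Type} [DecidableEq α] {x y : ℤ → α}

theorem besicovitchDist_self (x : ℤ → α) : besicovitchDist x x = 0 := by
  simp [besicovitchDist]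

theorem besicovitchDist_eq_one (h : ∀ i, x i ≠ y i) : besicovitchDist x y = 1 := by
  have density_eq_one (m : ℕ) :
      (((Finset.Icc (-(m : ℤ)) m).filter fun i => x i ≠ y i).card : ℝ) / (2 * m + 1) = 1 := by
    rw [Finset.filter_true_of_mem fun i _ => h i, Int.card_Icc,
      show ((m : ℤ) + 1 - -(m : ℤ)).toNat = 2 * m + 1 by lia]
    push_cast
    exact div_self (by positivity)
  simp only [besicovitchDist, density_eq_one, limsup_const]

end Besicovitch

section Spreading

variable {n : ℕ} {f : Fin (n + 1) × Fin (n + 1) × Fin (n + 1) → Fin (n + 1)}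

theorem continuous_caOfRule (f : Fin (n + 1) × Fin (n + 1) × Fin (n + 1) → Fin (n + 1)) :
    Continuous (caOfRule f) :=
  continuous_pi fun _ => (continuous_of_discreteTopology (f := f)).comp (by fun_prop)

theorem caOfRule_iterate_translate
    (f : Fin (n + 1) × Fin (n + 1) × Fin (n + 1) → Fin (n + 1))
    (x : ℤ → Fin (n + 1)) (a : ℤ) (t : ℕ) (i : ℤ) :
    (caOfRule f)^[t] (fun j => x (a + j)) i = (caOfRule f)^[t] x (a + i) := by
  induction t generalizing i with
  | zero => rfl
  | succ t ih => simp only [iterate_succ_apply', caOfRule, ih, add_sub_assoc, add_assoc]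

/-- A local rule is spreading if the blank at a cell or at its right neighbour makes the next state
of the cell blank, so that a single blank spreads to the left. -/
def IsSpreading (f : Fin (n + 1) × Fin (n + 1) × Fin (n + 1) → Fin (n + 1)) : Prop :=
  ∀ l c r, f (l, c, r) ≠ 0 → c ≠ 0 ∧ r ≠ 0

theorem IsSpreading.apply_zero (hf : IsSpreading f) : f (0, 0, 0) = 0 :=
  not_not.1 fun h => (hf _ _ _ h).1 rfl

theorem IsSpreading.iterate_ne_zero (hf : IsSpreading f) {x : ℤ → Fin (n + 1)} {t : ℕ} {i : ℤ}
    (s : ℕ) (h : (caOfRule f)^[t + s] x i ≠ 0) (j : ℕ) (hj : j ≤ s) :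
    (caOfRule f)^[t] x (i + j) ≠ 0 := by
  induction s generalizing i j with
  | zero => simpa [Nat.le_zero.1 hj] using h
  | succ s ih =>
    rw [← add_assoc, iterate_succ_apply'] at h
    obtain ⟨hi, hi'⟩ := hf _ _ _ h
    obtain _ | j := j
    · exact ih hi 0 (Nat.zero_le s)
    · simpa [add_assoc, add_comm (1 : ℤ)] using ih hi' j (Nat.succ_le_succ_iff.1 hj)

/-- A configuration is immortal if no blank ever appears in its orbit. -/
def IsImmortal (f : Fin (n + 1) × Fin (n + 1) × Fin (n + 1) → Fin (n + 1))
    (x : ℤ → Fin (n + 1)) : Prop :=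
  ∀ t i, (caOfRule f)^[t] x i ≠ 0

theorem exists_bound_of_forall_not_isImmortal (h : ∀ x, ¬ IsImmortal f x) :
    ∃ N : ℕ, ∀ x, ∃ t ≤ N, ∃ i : ℤ, i.natAbs ≤ N ∧ (caOfRule f)^[t] x i = 0 := by
  have isOpen_blank (s : ℕ × ℤ) : IsOpen {x | (caOfRule f)^[s.1] x s.2 = 0} :=
    (isOpen_discrete {0}).preimage
      ((continuous_apply s.2).comp ((continuous_caOfRule f).iterate s.1))
  obtain ⟨F, hF⟩ := isCompact_univ.elim_finite_subcover _ isOpen_blank fun x _ => by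
    simpa [IsImmortal] using h x
  refine ⟨F.sup fun s => max s.1 s.2.natAbs, fun x => ?_⟩
  obtain ⟨s, hs, hx⟩ := Set.mem_iUnion₂.1 (hF (Set.mem_univ x))
  have le_bound := Finset.le_sup (f := fun s : ℕ × ℤ => max s.1 s.2.natAbs) hs
  exact ⟨s.1, (le_max_left _ _).trans le_bound, s.2, (le_max_right _ _).trans le_bound, hx⟩

theorem IsSpreading.exists_iterate_eq_zero (hf : IsSpreading f) (h : ∀ x, ¬ IsImmortal f x) :
    ∃ k, ∀ x, (caOfRule f)^[k] x = fun _ => 0 := by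
  obtain ⟨N, hN⟩ := exists_bound_of_forall_not_isImmortal h
  refine ⟨3 * N, fun x => funext fun c => ?_⟩
  by_contra hc
  obtain ⟨t, ht, i, hi, hxi⟩ := hN fun j => x (c + N + j)
  rw [caOfRule_iterate_translate] at hxi
  refine hf.iterate_ne_zero (t := t) (3 * N - t) (by rwa [Nat.add_sub_cancel' (by lia)])
    (N + i).toNat (by lia) ?_
  rwa [Int.toNat_of_nonneg (by lia), ← add_assoc]

theorem IsSpreading.asymptoticallyNilpotentInDensity_iff (hf : IsSpreading f) :
    (∀ ε : ℝ, 0 < ε → ∃ k : ℕ, ∀ x : ℤ → Fin (n + 1),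
      besicovitchDist ((caOfRule f)^[k] x) (fun _ => 0) < ε) ↔ ¬ ∃ x, IsImmortal f x := by
  constructor
  · rintro h ⟨x, hx⟩
    obtain ⟨k, hk⟩ := h 1 one_pos
    exact (hk x).ne (besicovitchDist_eq_one (hx k))
  · intro h ε hε
    obtain ⟨k, hk⟩ := hf.exists_iterate_eq_zero (not_exists.1 h)
    exact ⟨k, fun x => by rwa [hk, besicovitchDist_self]⟩

end Spreading

/-! ### Rigidity of the `p`-adic skeleton -/

section Tracks

variable {α : Type*}

/-- The reading of a family of tracks `x 0, x 1, …` along the arithmetic progression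
`m, m + d, m + 2 * d, …`, the `v`-th term being read on the track `x v`. -/
def diag (x : ℕ → ℤ → α) (m d : ℤ) : ℕ → α := fun v => x v (m + v * d)

/-- The tracks obtained by moving the origin of the track `x v` to `-A - v * B`. -/
def recenter (A B : ℤ) (x : ℕ → ℤ → α) : ℕ → ℤ → α := fun v m => x v (m - A - v * B)

theorem diag_sub_mul (x : ℕ → ℤ → α) (v j : ℕ) (y d : ℤ) :
    diag x (y - v * d) d (v + j) = x (v + j) (y + j * d) := by
  unfold diag
  congr 1
  push_cast
  ring

theorem diag_recenter (A B : ℤ) (x : ℕ → ℤ → α) (m d : ℤ) :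
    diag (recenter A B x) m d = diag x (m - A) (d - B) := by
  funext v
  unfold diag recenter
  congr 1
  ring

theorem recenter_recenter (A A' B B' : ℤ) (x : ℕ → ℤ → α) :
    recenter A' B' (recenter A B x) = recenter (A + A') (B + B') x := by
  funext v m
  unfold recenter
  congr 1
  ring

end Tracks

/-- The local rule of the `p`-adic skeleton. For a progression of nonzero integers `y v` it is
satisfied by their residues `r v` modulo `p` and their last nonzero `p`-adic digits `u v`, read for
`v ≤ K`: after division by the largest possible power of `p`, either `y v`, `y (v + 1)`, `y (v + 2)`
are all units or exactly one of them is divisible by `p`, whence the four cases of `three_term`.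
The hypotheses of `jump` express that `y v` is more divisible than the common difference `d`, and
its conclusion compares `y v` with `p * d = y (v + p) - y v`. -/
structure SkeletonRule (p K : ℕ) (r u : ℕ → ZMod p) : Prop where
  ne_zero : ∀ v ≤ K, u v ≠ 0
  eq_residue : ∀ v ≤ K, r v ≠ 0 → u v = r v
  residue_step : ∀ v, v + 2 ≤ K → r (v + 2) = 2 * r (v + 1) - r v
  three_term : ∀ v, v + 2 ≤ K →
    2 * u (v + 1) = u v + u (v + 2) ∨ u (v + 2) = 2 * u (v + 1) ∨ u v = -u (v + 2) ∨
      u v = 2 * u (v + 1)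
  jump : ∀ v, v + p ≤ K → u (v + 2) = 2 * u (v + 1) → u (v + 3) = 3 * u (v + 1) →
    u (v + p) = u (v + 1) ∨ u (v + p) = u v + u (v + 1) ∨ u v = -u (v + 1)

theorem eq_affine_of_second_difference_eq_zero {R : Type*} [CommRing R] {s : ℕ → R} {K : ℕ}
    (hs : ∀ v, v + 2 ≤ K → s (v + 2) = 2 * s (v + 1) - s v) {v : ℕ} (hv : v ≤ K) :
    s v = s 0 + v * (s 1 - s 0) := by
  induction v using Nat.twoStepInduction with
  | zero => simp
  | one => simp
  | more v ih ih' =>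
    rw [hs v hv, ih (by lia), ih' (by lia)]
    push_cast
    ring

theorem exists_notMem_of_card_lt {α : Type*} [Fintype α] {s : Finset α}
    (hs : s.card < Fintype.card α) : ∃ a, a ∉ s :=
  (Finset.exists_mem_notMem_of_card_lt_card (Finset.card_univ (α := α) ▸ hs)).imp fun _ => And.right

-- The pairs `{π i, G i}` are pairwise intersecting edges of the complete graph on `α`; they cannot
-- form a triangle because they cover all vertices, so they form a star.
theorem exists_star_center {ι α : Type*} [Fintype α] (hα : 4 ≤ Fintype.card α)
    {π G : ι → α} (hπ : Surjective π) (hG : ∀ i, G i ≠ π i)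
    (inter : ∀ i j, π i ≠ π j → G i = G j ∨ G i = π j ∨ G j = π i) :
    ∃ s, ∀ i, π i ≠ s → G i = s := by
  classical
  have exists_avoiding (a b c : α) : ∃ i, π i ≠ a ∧ π i ≠ b ∧ π i ≠ c := by
    obtain ⟨z, hz⟩ := exists_notMem_of_card_lt
      (Finset.card_le_three (a := a) (b := b) (c := c) |>.trans_lt hα)
    obtain ⟨i, rfl⟩ := hπ z
    exact ⟨i, by simpa using hz⟩
  have : Nonempty α := Fintype.card_pos_iff.1 (by lia)
  obtain ⟨i, -⟩ := hπ (Classical.arbitrary α)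
  obtain ⟨j, hji, hjG, -⟩ := exists_avoiding (π i) (G i) (π i)
  obtain ⟨k, hki, hkG, hkj⟩ := exists_avoiding (π i) (G i) (π j)
  have center_eq : G j = G k := by grind
  exact ⟨G j, fun l hl => by by_cases h₁ : π l = π j <;> by_cases h₂ : π l = π k <;> grind⟩

section ZMod

variable {p : ℕ} [Fact p.Prime]

theorem exists_ge_intCast_eq (z : ZMod p) (b : ℤ) : ∃ Z : ℤ, b ≤ Z ∧ (Z : ZMod p) = z := by
  have hp : (0 : ℤ) < p := mod_cast (Fact.out : p.Prime).pos
  refine ⟨z.val + p * |b|, ?_, by simp⟩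
  nlinarith [le_abs_self b, abs_nonneg b]

theorem exists_le_intCast_eq (z : ZMod p) (b : ℤ) : ∃ Z : ℤ, Z ≤ b ∧ (Z : ZMod p) = z := by
  obtain ⟨Z, hZ, hz⟩ := exists_ge_intCast_eq (-z) (-b)
  exact ⟨-Z, by lia, by simp [hz]⟩

theorem natCast_ne_zero_of_lt {j : ℕ} (hj : j ≠ 0) (hjp : j < p) : (j : ZMod p) ≠ 0 := by
  rw [Ne, ZMod.natCast_eq_zero_iff]
  exact Nat.not_dvd_of_pos_of_lt (Nat.pos_of_ne_zero hj) hjp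

theorem exists_common_center (hp : 5 ≤ p) {G κ : ℤ → ZMod p} {b : ℤ} (hG : ∀ Y, G Y ≠ Y)
    (h : ∀ Y Z : ℤ, b ≤ Z - Y → (Z : ZMod p) ≠ Y → κ Z = Y ∨ κ Z = G Y ∨ G Y = Z) :
    ∃ s : ZMod p, (∀ Y : ℤ, (Y : ZMod p) ≠ s → G Y = s) ∧
      ∀ Z : ℤ, (Z : ZMod p) ≠ s → κ Z = s := by
  have exists_avoiding (a b c d : ZMod p) : ∃ z, z ≠ a ∧ z ≠ b ∧ z ≠ c ∧ z ≠ d := by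
    obtain ⟨z, hz⟩ := exists_notMem_of_card_lt (s := {a, b, c, d})
      (Finset.card_le_four.trans_lt (by rwa [ZMod.card]))
    exact ⟨z, by simpa using hz⟩
  have inter (Y₁ Y₂ : ℤ) (hne : (Y₁ : ZMod p) ≠ Y₂) : G Y₁ = G Y₂ ∨ G Y₁ = Y₂ ∨ G Y₂ = Y₁ := by
    obtain ⟨z, h₁, h₂, h₃, h₄⟩ := exists_avoiding Y₁ Y₂ (G Y₁) (G Y₂)
    obtain ⟨Z, hZ, rfl⟩ := exists_ge_intCast_eq z (max (b + Y₁) (b + Y₂))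
    have := h Y₁ Z (by lia) h₁
    have := h Y₂ Z (by lia) h₂
    grind
  obtain ⟨s, hs⟩ := exists_star_center (by rw [ZMod.card]; lia) ZMod.intCast_surjective hG inter
  refine ⟨s, hs, fun Z hZ => ?_⟩
  obtain ⟨y₁, hs₁, hZ₁, -, -⟩ := exists_avoiding s Z s Z
  obtain ⟨y₂, hs₂, hZ₂, hne, -⟩ := exists_avoiding s Z y₁ y₁
  obtain ⟨Y₁, hY₁, rfl⟩ := exists_le_intCast_eq y₁ (Z - b)
  obtain ⟨Y₂, hY₂, rfl⟩ := exists_le_intCast_eq y₂ (Z - b)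
  have := h Y₁ Z (by lia) hZ₁.symm
  have := h Y₂ Z (by lia) hZ₂.symm
  grind

theorem eq_zero_of_forall_three_term (hp : 5 ≤ p) {e : ZMod p}
    (h : ∀ a b : ZMod p, a ≠ 0 → b ≠ 0 → 2 * b - a - e ≠ 0 →
      2 * b = a + (2 * b - a - e) ∨ 2 * b - a - e = 2 * b ∨ a = -(2 * b - a - e) ∨ a = 2 * b) :
    e = 0 := by
  have two_ne_zero : (2 : ZMod p) ≠ 0 := mod_cast natCast_ne_zero_of_lt two_ne_zero (by lia)
  by_contra he
  obtain ⟨c, hc⟩ := exists_notMem_of_card_lt (s := {0, e})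
    (Finset.card_le_two.trans_lt (by rw [ZMod.card]; lia))
  obtain ⟨a, ha⟩ := exists_notMem_of_card_lt (s := {0, -e, c, c - e})
    (Finset.card_le_four.trans_lt (by rwa [ZMod.card]))
  simp only [Finset.mem_insert, Finset.mem_singleton, not_or] at hc ha
  have two_mul_half : 2 * (c / 2) = c := by field_simp
  have := h a (c / 2) ha.1 (div_ne_zero hc.1 two_ne_zero) (by grind)
  rw [two_mul_half] at this
  grind

end ZMod

/-- The tracks `r` and `u` carry the residues modulo `p` and, for numbers of `p`-adic valuation less
than `k`, the last nonzero `p`-adic digits of the integers they are indexed by. -/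
structure IsSkeleton (p K k : ℕ) (r u : ℕ → ℤ → ZMod p) : Prop where
  residue : ∀ v ≤ K, ∀ m : ℤ, r v m = m
  digit : ∀ v ≤ K, ∀ j < k, ∀ c : ℤ, (c : ZMod p) ≠ 0 → u v (p ^ j * c) = c

section Skeleton

variable {p K k : ℕ} [Fact p.Prime] {r u : ℕ → ℤ → ZMod p} {b : ℤ}

theorem le_pow_mul_of_abs_le (i : ℕ) {D : ℤ} (hD : |b| ≤ D) : b ≤ (p : ℤ) ^ i * D := by
  have : (1 : ℤ) ≤ (p : ℤ) ^ i := one_le_pow₀ (mod_cast (Fact.out : p.Prime).one_le)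
  nlinarith [le_abs_self b, abs_nonneg b]

theorem IsSkeleton.recenter_of_dvd (h : IsSkeleton p K (k + 1) r u) {A B : ℤ}
    (hA : (p : ℤ) ^ (k + 1) ∣ A) (hB : (p : ℤ) ^ (k + 1) ∣ B) :
    IsSkeleton p K (k + 1) (recenter A B r) (recenter A B u) := by
  obtain ⟨a, rfl⟩ := hA
  obtain ⟨b, rfl⟩ := hB
  refine ⟨fun v hv m => ?_, fun v hv j hj c hc => ?_⟩
  · simp [recenter, h.residue v hv, pow_succ]
  · obtain ⟨i, rfl⟩ : ∃ i, k = j + i := Nat.exists_eq_add_of_le (Nat.lt_succ_iff.1 hj)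
    have cast_eq : ((c - p * (p ^ i * (a + v * b)) : ℤ) : ZMod p) = c := by simp
    rw [← cast_eq, ← h.digit v hv j hj _ (by rwa [cast_eq]), recenter]
    congr 1
    ring

theorem IsSkeleton.jump (hp : 5 ≤ p) (hu : IsSkeleton p K (k + 1) r u)
    (hR : ∀ m d : ℤ, b ≤ d → SkeletonRule p K (diag r m d) (diag u m d)) {v : ℕ} (hv : v + p ≤ K)
    {Y Z : ℤ} (hYZ : |b| ≤ Z - Y) (hne : (Z : ZMod p) ≠ Y) :
    u (v + p) (p ^ (k + 1) * Z) = Z - Y ∨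
      u (v + p) (p ^ (k + 1) * Z) = u v (p ^ (k + 1) * Y) + (Z - Y) ∨
      u v (p ^ (k + 1) * Y) = -(Z - Y) := by
  set y : ℤ := p ^ (k + 1) * Y
  set d : ℤ := p ^ k * (Z - Y)
  have digit_add {j : ℕ} (hj : j ≠ 0) (hjp : j < p) (hjK : v + j ≤ K) :
      diag u (y - v * d) d (v + j) = j * ((Z : ZMod p) - Y) := by
    have cast_eq : ((p * Y + j * (Z - Y) : ℤ) : ZMod p) = j * ((Z : ZMod p) - Y) := by simp
    rw [diag_sub_mul, show y + j * d = p ^ k * (p * Y + j * (Z - Y)) by ring,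
      hu.digit _ hjK _ (Nat.lt_succ_self k), cast_eq]
    rw [cast_eq]
    exact mul_ne_zero (natCast_ne_zero_of_lt hj hjp) (sub_ne_zero.2 hne)
  have digit_zero : diag u (y - v * d) d v = u v y := by
    simpa using diag_sub_mul u v 0 y d
  have digit_p : diag u (y - v * d) d (v + p) = u (v + p) (p ^ (k + 1) * Z) := by
    rw [diag_sub_mul]
    congr 1
    ring
  have one := digit_add one_ne_zero (by lia) (by lia)
  have two := digit_add two_ne_zero (by lia) (by lia)
  have three := digit_add three_ne_zero (by lia) (by lia)
  push_cast at one two three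
  have := (hR (y - v * d) d (le_pow_mul_of_abs_le k hYZ)).jump v hv
    (by rw [one, two, one_mul]) (by rw [one, three, one_mul])
  rwa [digit_zero, digit_p, one, one_mul] at this

theorem IsSkeleton.exists_center (hp : 5 ≤ p) (hK : 2 * p ≤ K + 1)
    (hu : IsSkeleton p K (k + 1) r u)
    (hR : ∀ m d : ℤ, b ≤ d → SkeletonRule p K (diag r m d) (diag u m d)) {v : ℕ} (hv : v ≤ K) :
    ∃ s : ZMod p, ∀ Y : ℤ, (Y : ZMod p) ≠ s → u v (p ^ (k + 1) * Y) = Y - s := by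
  have exists_pair {w : ℕ} (hw : w + p ≤ K) : ∃ s : ZMod p,
      (∀ Y : ℤ, (Y : ZMod p) ≠ s → u w (p ^ (k + 1) * Y) = Y - s) ∧
        ∀ Y : ℤ, (Y : ZMod p) ≠ s → u (w + p) (p ^ (k + 1) * Y) = Y - s := by
    have hG (Y : ℤ) : (Y : ZMod p) - u w (p ^ (k + 1) * Y) ≠ Y := by
      have := (hR (p ^ (k + 1) * Y - w * b) b le_rfl).ne_zero w (by lia)
      simpa [diag] using this
    obtain ⟨s, h₁, h₂⟩ := exists_common_center hp (b := |b|) hG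
      (κ := fun Y => (Y : ZMod p) - u (w + p) (p ^ (k + 1) * Y))
      fun Y Z hYZ hne => by grind [hu.jump hp hR hw hYZ hne]
    exact ⟨s, fun Y hY => by grind [h₁ Y hY], fun Y hY => by grind [h₂ Y hY]⟩
  rcases le_or_gt (v + p) K with hvp | hvp
  · exact (exists_pair hvp).imp fun _ => And.left
  · obtain ⟨w, rfl⟩ : ∃ w, v = w + p := ⟨v - p, by lia⟩
    exact (exists_pair hv).imp fun _ => And.right

theorem second_difference_center_eq_zero (hp : 5 ≤ p) {s : ℕ → ZMod p}
    (hs : ∀ v ≤ K, ∀ Y : ℤ, (Y : ZMod p) ≠ s v → u v (p ^ k * Y) = Y - s v)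
    (hR : ∀ m d : ℤ, b ≤ d → SkeletonRule p K (diag r m d) (diag u m d)) {v : ℕ}
    (hv : v + 2 ≤ K) : s (v + 2) = 2 * s (v + 1) - s v := by
  suffices s v - 2 * s (v + 1) + s (v + 2) = 0 by linear_combination this
  refine eq_zero_of_forall_three_term hp fun a₀ a₁ h₀ h₁ h₂ => ?_
  obtain ⟨Y, -, hY⟩ := exists_ge_intCast_eq (a₀ + s v) 0
  obtain ⟨D, hD, hDz⟩ := exists_ge_intCast_eq (a₁ + s (v + 1) - (a₀ + s v)) |b|
  have digit_add (j : ℕ) (hj : v + j ≤ K) {a : ZMod p} (ha : a ≠ 0)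
      (hYD : (Y : ZMod p) + j * D = a + s (v + j)) :
      diag u (p ^ k * Y - v * (p ^ k * D)) (p ^ k * D) (v + j) = a := by
    have cast_eq : ((Y + j * D : ℤ) : ZMod p) = a + s (v + j) := by push_cast; exact hYD
    rw [diag_sub_mul, show (p : ℤ) ^ k * Y + j * (p ^ k * D) = p ^ k * (Y + j * D) by ring,
      hs _ hj _ (by simpa [cast_eq] using ha), cast_eq, add_sub_cancel_right]
  have three_term := (hR (p ^ k * Y - v * (p ^ k * D)) (p ^ k * D)
    (le_pow_mul_of_abs_le k hD)).three_term v hv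
  have zero := digit_add 0 (by lia) h₀ (by simp [hY])
  rw [add_zero] at zero
  rwa [zero, digit_add 1 (by lia) h₁ (by rw [hY, hDz]; push_cast; ring),
    digit_add 2 hv h₂ (by rw [hY, hDz]; push_cast; ring)] at three_term

theorem IsSkeleton.exists_succ (hp : 5 ≤ p) (hK : 2 * p ≤ K + 1)
    (h : IsSkeleton p K (k + 1) r u)
    (hR : ∀ m d : ℤ, b ≤ d → SkeletonRule p K (diag r m d) (diag u m d)) :
    ∃ A B, IsSkeleton p K (k + 2) (recenter A B r) (recenter A B u) := by
  choose! s hs using fun v (hv : v ≤ K) => h.exists_center hp hK hR hv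
  obtain ⟨a, -, ha⟩ := exists_ge_intCast_eq (s 0) 0
  obtain ⟨b, -, hb⟩ := exists_ge_intCast_eq (s 1 - s 0) 0
  have s_eq {v : ℕ} (hv : v ≤ K) : s v = ((a + v * b : ℤ) : ZMod p) := by
    rw [eq_affine_of_second_difference_eq_zero
      (fun _ => second_difference_center_eq_zero hp hs hR) hv]
    push_cast
    rw [ha, hb]
  have h' := h.recenter_of_dvd (A := -(p ^ (k + 1) * a)) (B := -(p ^ (k + 1) * b))
    (by simp) (by simp)
  refine ⟨_, _, h'.residue, fun v hv j hj c hc => ?_⟩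
  rcases Nat.lt_succ_iff_lt_or_eq.1 hj with hj | rfl
  · exact h'.digit v hv j hj c hc
  · have digit := hs v hv (c + (a + v * b)) (by rw [Int.cast_add, ← s_eq hv]; simpa using hc)
    rw [Int.cast_add, ← s_eq hv, add_sub_cancel_right] at digit
    rw [← digit, recenter]
    congr 1
    ring

theorem exists_isSkeleton_one (hstep : ∀ v ≤ K, ∀ m, r v (m + 1) = r v m + 1)
    (hR : ∀ m d : ℤ, 0 ≤ d → SkeletonRule p K (diag r m d) (diag u m d)) :
    ∃ A B, IsSkeleton p K 1 (recenter A B r) (recenter A B u) := by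
  have r_eq_add {v : ℕ} (hv : v ≤ K) (m : ℤ) : r v m = r v 0 + m := by
    induction m using Int.induction_on with
    | zero => simp
    | succ i ih => rw [hstep v hv, ih]; push_cast; ring
    | pred i ih =>
      have := hstep v hv (-i - 1)
      rw [sub_add_cancel, ih] at this
      push_cast at this ⊢
      linear_combination -this
  have r_eq {v : ℕ} (hv : v ≤ K) : r v 0 = r 0 0 + v * (r 1 0 - r 0 0) :=
    eq_affine_of_second_difference_eq_zero (s := fun v => r v 0)
      (fun w hw => by simpa [diag] using (hR 0 0 le_rfl).residue_step w hw) hv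
  obtain ⟨a, -, ha⟩ := exists_ge_intCast_eq (r 0 0) 0
  obtain ⟨b, -, hb⟩ := exists_ge_intCast_eq (r 1 0 - r 0 0) 0
  have residue {v : ℕ} (hv : v ≤ K) (m : ℤ) : recenter a b r v m = m := by
    rw [recenter, r_eq_add hv, r_eq hv, ← hb, ← ha]
    push_cast
    ring
  refine ⟨a, b, fun v hv => residue hv, fun v hv j hj c hc => ?_⟩
  obtain rfl : j = 0 := by lia
  rw [pow_zero, one_mul, ← residue hv]
  have := (hR (c - a - v * b) 0 le_rfl).eq_residue v hv
  simp only [diag, mul_zero, add_zero] at this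
  exact this ((residue hv c).trans_ne hc)

theorem exists_isSkeleton (hp : 5 ≤ p) (hK : 2 * p ≤ K + 1)
    (hstep : ∀ v ≤ K, ∀ m, r v (m + 1) = r v m + 1)
    (hR : ∀ m d : ℤ, 0 ≤ d → SkeletonRule p K (diag r m d) (diag u m d)) (k : ℕ) :
    ∃ A B, IsSkeleton p K (k + 1) (recenter A B r) (recenter A B u) := by
  induction k with
  | zero => exact exists_isSkeleton_one hstep hR
  | succ k ih =>
    obtain ⟨A, B, h⟩ := ih
    obtain ⟨A', B', h'⟩ := h.exists_succ hp hK (b := B) fun m d hd => by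
      simpa only [diag_recenter] using hR (m - A) (d - B) (sub_nonneg.2 hd)
    rw [recenter_recenter, recenter_recenter] at h'
    exact ⟨_, _, h'⟩

end Skeleton

/-! ### Existence of the `p`-adic skeleton -/

/-- The last nonzero `p`-adic digit of an integer, with the junk value `0` at `0`. -/
noncomputable def lastDigit (p : ℕ) (X : ℤ) : ZMod p := (X / (p : ℤ) ^ padicValInt p X : ℤ)

/-- The property of a sequence that `u 1, u 2, u 3` are proportional to `1, 2, 3`. For the last
nonzero digits of an arithmetic progression it characterises the case in which the term of index `0`
is more divisible by `p` than the common difference. -/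
def IsInitiallyLinear {R : Type*} [Semiring R] (u : ℕ → R) : Prop :=
  u 2 = 2 * u 1 ∧ u 3 = 3 * u 1

section LastDigit

variable {p : ℕ} [Fact p.Prime] {x d X D c y : ℤ}

theorem padicValInt_pow_mul (j : ℕ) (hy : y ≠ 0) :
    padicValInt p (p ^ j * y) = j + padicValInt p y := by
  have hp : (p : ℤ) ^ j ≠ 0 := pow_ne_zero _ (mod_cast (Fact.out : p.Prime).ne_zero)
  rw [padicValInt.mul hp hy, ← Nat.cast_pow, padicValInt.of_nat, padicValNat.prime_pow]

theorem lastDigit_pow_mul (j : ℕ) (hy : y ≠ 0) : lastDigit p (p ^ j * y) = lastDigit p y := by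
  have hp : (0 : ℤ) < p ^ j := pow_pos (mod_cast (Fact.out : p.Prime).pos) j
  rw [lastDigit, padicValInt_pow_mul j hy, pow_add, Int.mul_ediv_mul_of_pos _ _ hp, lastDigit]

theorem padicValInt_eq_zero (hy : (y : ZMod p) ≠ 0) : padicValInt p y = 0 :=
  padicValInt.eq_zero_of_not_dvd (by rwa [← ZMod.intCast_zmod_eq_zero_iff_dvd])

theorem lastDigit_eq {z : ZMod p} (hz : z ≠ 0) (hy : (y : ZMod p) = z) : lastDigit p y = z := by
  rw [lastDigit, padicValInt_eq_zero (hy.trans_ne hz), pow_zero, Int.ediv_one, hy]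

theorem exists_eq_pow_mul (hy : y ≠ 0) : ∃ (j : ℕ) (c : ℤ), y = p ^ j * c ∧ (c : ZMod p) ≠ 0 := by
  have hfin : FiniteMultiplicity (p : ℤ) y :=
    Int.finiteMultiplicity_iff.2 ⟨by simpa using (Fact.out : p.Prime).ne_one, hy⟩
  obtain ⟨c, hc, hndvd⟩ := hfin.exists_eq_pow_mul_and_not_dvd
  exact ⟨_, c, hc, by rwa [Ne, ZMod.intCast_zmod_eq_zero_iff_dvd]⟩

theorem lastDigit_ne_zero (hy : y ≠ 0) : lastDigit p y ≠ 0 := by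
  obtain ⟨j, c, rfl, hc⟩ := exists_eq_pow_mul (p := p) hy
  rwa [lastDigit_pow_mul j (right_ne_zero_of_mul hy), lastDigit_eq hc rfl]

theorem exists_eq_pow_mul_pair (hD : D ≠ 0) : ∃ (j : ℕ) (x d : ℤ), X = p ^ j * x ∧ D = p ^ j * d ∧
    ((x : ZMod p) ≠ 0 ∨ (d : ZMod p) ≠ 0) := by
  obtain ⟨i, d, rfl, hd⟩ := exists_eq_pow_mul (p := p) hD
  obtain rfl | hX := eq_or_ne X 0
  · exact ⟨i, 0, d, by simp, rfl, .inr hd⟩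
  obtain ⟨l, x, rfl, hx⟩ := exists_eq_pow_mul (p := p) hX
  obtain ⟨t, rfl⟩ | ⟨t, rfl⟩ := (le_total i l).imp Nat.exists_eq_add_of_le Nat.exists_eq_add_of_le
  · exact ⟨i, p ^ t * x, d, by ring, rfl, .inr hd⟩
  · exact ⟨l, x, p ^ t * d, rfl, by ring, .inl hx⟩

theorem exists_primitive_progression (hD : D ≠ 0) (hne : ∀ v : ℕ, X + v * D ≠ 0) :
    ∃ (j : ℕ) (x d : ℤ), ((x : ZMod p) ≠ 0 ∨ (d : ZMod p) ≠ 0) ∧ ∀ v : ℕ, x + v * d ≠ 0 ∧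
      lastDigit p (X + v * D) = lastDigit p (x + v * d) ∧
      padicValInt p (X + v * D) = j + padicValInt p (x + v * d) := by
  obtain ⟨j, x, d, rfl, rfl, hxd⟩ := exists_eq_pow_mul_pair (p := p) (X := X) hD
  refine ⟨j, x, d, hxd, fun v => ?_⟩
  have factor : (p : ℤ) ^ j * x + v * (p ^ j * d) = p ^ j * (x + v * d) := by ring
  have hv : x + v * d ≠ 0 := right_ne_zero_of_mul (factor ▸ hne v)
  rw [factor]
  exact ⟨hv, lastDigit_pow_mul j hv, padicValInt_pow_mul j hv⟩

theorem intCast_eq_zero_or_lastDigit_eq (y : ℤ) : (y : ZMod p) = 0 ∨ lastDigit p y = y :=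
  or_iff_not_imp_left.2 fun hy => lastDigit_eq hy rfl

theorem zmod_two_ne_zero (hp : 5 ≤ p) : (2 : ZMod p) ≠ 0 :=
  mod_cast natCast_ne_zero_of_lt (p := p) two_ne_zero (by lia)

theorem lastDigit_three_term (hp : 5 ≤ p) (hD : D ≠ 0) (hne : ∀ v : ℕ, X + v * D ≠ 0) :
    2 * lastDigit p (X + D) = lastDigit p X + lastDigit p (X + 2 * D) ∨
      lastDigit p (X + 2 * D) = 2 * lastDigit p (X + D) ∨
      lastDigit p X = -lastDigit p (X + 2 * D) ∨ lastDigit p X = 2 * lastDigit p (X + D) := by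
  obtain ⟨_, x, d, hxd, h⟩ := exists_primitive_progression (p := p) hD hne
  have two_ne := zmod_two_ne_zero hp
  have h₀ := (h 0).2.1
  have h₁ := (h 1).2.1
  have h₂ := (h 2).2.1
  have d₀ := intCast_eq_zero_or_lastDigit_eq (p := p) x
  have d₁ := intCast_eq_zero_or_lastDigit_eq (p := p) (x + d)
  have d₂ := intCast_eq_zero_or_lastDigit_eq (p := p) (x + 2 * d)
  push_cast [zero_mul, add_zero, one_mul] at h₀ h₁ h₂ d₁ d₂
  grind

theorem intCast_eq_zero_of_isInitiallyLinear (hp : 5 ≤ p)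
    (h : (x : ZMod p) ≠ 0 ∨ (d : ZMod p) ≠ 0) (hne : x + d ≠ 0)
    (hlin : IsInitiallyLinear fun v => lastDigit p (x + v * d)) :
    (x : ZMod p) = 0 ∧ (d : ZMod p) ≠ 0 := by
  have two_ne := zmod_two_ne_zero hp
  have h₀ := lastDigit_ne_zero (p := p) hne
  have h₁ := intCast_eq_zero_or_lastDigit_eq (p := p) (x + d)
  have h₂ := intCast_eq_zero_or_lastDigit_eq (p := p) (x + 2 * d)
  have h₃ := intCast_eq_zero_or_lastDigit_eq (p := p) (x + 3 * d)
  obtain ⟨hlin₂, hlin₃⟩ := hlin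
  push_cast at h₁ h₂ h₃ hlin₂ hlin₃
  grind

theorem lastDigit_add (hd : (d : ZMod p) ≠ 0) :
    lastDigit p (x + d) = d ∨ lastDigit p (x + d) = lastDigit p x + d ∨ lastDigit p x = -d := by
  have h₀ := intCast_eq_zero_or_lastDigit_eq (p := p) x
  have h₁ := intCast_eq_zero_or_lastDigit_eq (p := p) (x + d)
  push_cast at h₁
  grind

theorem lastDigit_jump (hp : 5 ≤ p) (hD : D ≠ 0) (hne : ∀ v : ℕ, X + v * D ≠ 0)
    (hlin : IsInitiallyLinear fun v => lastDigit p (X + v * D)) :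
    lastDigit p (X + p * D) = lastDigit p (X + D) ∨
      lastDigit p (X + p * D) = lastDigit p X + lastDigit p (X + D) ∨
      lastDigit p X = -lastDigit p (X + D) := by
  obtain ⟨_, x, d, hxd, h⟩ := exists_primitive_progression (p := p) hD hne
  simp only [h] at hlin
  obtain ⟨hx, hd⟩ := intCast_eq_zero_of_isInitiallyLinear hp hxd (by simpa using (h 1).1) hlin
  obtain ⟨z, rfl⟩ := (ZMod.intCast_zmod_eq_zero_iff_dvd x p).1 hx
  have factor : (p * z + p * d : ℤ) = p ^ 1 * (z + d) := by ring
  have hz : z ≠ 0 := right_ne_zero_of_mul (a := (p : ℤ)) (by simpa using (h 0).1)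
  have hzd : z + d ≠ 0 := right_ne_zero_of_mul (factor ▸ (h p).1)
  have digit_zero : lastDigit p X = lastDigit p z := by
    rw [← lastDigit_pow_mul 1 hz, pow_one]
    simpa using (h 0).2.1
  have digit_one : lastDigit p (X + D) = d := by
    simpa using (h 1).2.1.trans (lastDigit_eq hd (by simp))
  rw [(h p).2.1, factor, lastDigit_pow_mul 1 hzd, digit_zero, digit_one]
  exact lastDigit_add hd

theorem skeletonRule_lastDigit (hp : 5 ≤ p) (K : ℕ) (hD : D ≠ 0)
    (hne : ∀ v : ℕ, X + v * D ≠ 0) :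
    SkeletonRule p K (fun v => (X + v * D : ℤ)) fun v => lastDigit p (X + v * D) := by
  have add_mul (v w : ℕ) : X + ((v + w : ℕ) : ℤ) * D = X + v * D + w * D := by push_cast; ring
  have hne' (v w : ℕ) : X + v * D + w * D ≠ 0 := add_mul v w ▸ hne (v + w)
  constructor
  case ne_zero => exact fun v _ => lastDigit_ne_zero (hne v)
  case eq_residue => exact fun v _ h => lastDigit_eq h rfl
  case residue_step => intro v _; push_cast; ring
  case three_term =>
    intro v _
    simpa only [add_mul, Nat.cast_one, Nat.cast_two, one_mul]
      using lastDigit_three_term hp hD (hne' v)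
  case jump =>
    intro v _ h₂ h₃
    simp only [add_mul] at h₂ h₃ ⊢
    simpa using lastDigit_jump hp hD (hne' v) ⟨h₂, h₃⟩

theorem exists_padicValInt_eq_of_lastDigit_eq (hp : 5 ≤ p) (hD : D ≠ 0)
    (hne : ∀ v : ℕ, X + v * D ≠ 0)
    (h₁ : lastDigit p (X + D) = lastDigit p X) (h₂ : lastDigit p (X + 2 * D) = lastDigit p X) :
    ∃ j, ∀ v : ℕ, padicValInt p (X + v * D) = j := by
  obtain ⟨j, x, d, hxd, h⟩ := exists_primitive_progression (p := p) hD hne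
  have two_ne := zmod_two_ne_zero hp
  have hd : (d : ZMod p) = 0 := by
    have h₃ := (h 0).2.1
    have h₄ := (h 1).2.1
    have h₅ := (h 2).2.1
    have d₀ := intCast_eq_zero_or_lastDigit_eq (p := p) x
    have d₁ := intCast_eq_zero_or_lastDigit_eq (p := p) (x + d)
    have d₂ := intCast_eq_zero_or_lastDigit_eq (p := p) (x + 2 * d)
    push_cast [zero_mul, add_zero, one_mul] at h₃ h₄ h₅ d₁ d₂
    grind
  refine ⟨j, fun v => ?_⟩
  rw [(h v).2.2, padicValInt_eq_zero (by simpa [hd] using hxd), add_zero]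

theorem IsInitiallyLinear.exists_padicValInt_eq (hp : 5 ≤ p) (hD : D ≠ 0)
    (hne : ∀ v : ℕ, X + v * D ≠ 0)
    (hlin : IsInitiallyLinear fun v => lastDigit p (X + v * D)) :
    ∃ j, (∀ v : ℕ, (v : ZMod p) ≠ 0 → padicValInt p (X + v * D) = j) ∧
      (lastDigit p (X + (2 * p : ℕ) * D) = 2 * lastDigit p (X + D) →
        padicValInt p (X + p * D) = j + 1) := by
  obtain ⟨j, x, d, hxd, h⟩ := exists_primitive_progression (p := p) hD hne
  simp only [h] at hlin
  obtain ⟨hx, hd⟩ := intCast_eq_zero_of_isInitiallyLinear hp hxd (by simpa using (h 1).1) hlin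
  refine ⟨j, fun v hv => ?_, fun h₂ => ?_⟩
  · rw [(h v).2.2, padicValInt_eq_zero (by simp [hx, hv, hd]), add_zero]
  obtain ⟨z, rfl⟩ := (ZMod.intCast_zmod_eq_zero_iff_dvd x p).1 hx
  have factor (w : ℕ) : (p * z + (w * p : ℕ) * d : ℤ) = p ^ 1 * (z + w * d) := by
    push_cast; ring
  have digit_one : lastDigit p (X + D) = d := by
    simpa using (h 1).2.1.trans (lastDigit_eq hd (by simp))
  have digit_two : lastDigit p (z + 2 * d) = 2 * d := by
    have hzd : z + (2 : ℕ) * d ≠ 0 := right_ne_zero_of_mul (factor 2 ▸ (h (2 * p)).1)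
    rw [← digit_one, ← h₂, (h _).2.1, factor 2, lastDigit_pow_mul 1 hzd, Nat.cast_two]
  have hzd : ((z + d : ℤ) : ZMod p) ≠ 0 := by
    intro h₀
    have : lastDigit p (z + 2 * d) = d :=
      lastDigit_eq hd (by push_cast at h₀ ⊢; linear_combination h₀)
    exact hd (by linear_combination this - digit_two)
  have val_one : padicValInt p (p ^ 1 * (z + d)) = 1 := by
    rw [padicValInt_pow_mul 1 (by rintro h₀; simp [h₀] at hzd), padicValInt_eq_zero hzd]
  rw [(h p).2.2, ← val_one]
  congr 2
  ring

end LastDigit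

/-! ### Tilings carried by a pair of skeletons -/

section Tilings

/-- A set of tiles with constraints on vertically and horizontally adjacent tiles of a quadrant and
on the tile in its corner. -/
structure TileSystem (α : Type*) where
  V : α → α → Prop
  H : α → α → Prop
  seed : α → Prop

variable {α : Type*}

/-- The reflection of a tile system in the diagonal of the quadrant. -/
def TileSystem.swap (S : TileSystem α) : TileSystem α := ⟨S.H, S.V, S.seed⟩

/-- A tiling of the quadrant whose constraints are imposed on the square `i, j < k` only. -/
structure TileSystem.IsTiling (S : TileSystem α) (k : ℕ) (tile : ℕ → ℕ → α) : Prop where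
  seed : S.seed (tile 0 0)
  V : ∀ i < k, ∀ j < k, S.V (tile i j) (tile (i + 1) j)
  H : ∀ i < k, ∀ j < k, S.H (tile i j) (tile i (j + 1))

theorem TileSystem.IsTiling.swap {S : TileSystem α} {k : ℕ} {tile : ℕ → ℕ → α}
    (h : S.IsTiling k tile) : S.swap.IsTiling k fun i j => tile j i where
  seed := h.seed
  V i hi j hj := h.H j hj i hi
  H i hi j hj := h.V j hj i hi

/-- The local rule of a layer `T` of tiles over a `p`-adic and a `q`-adic skeleton. It ties `T` to a
tiling in which the tile of coordinates `i, j` is carried by the integers of `p`-adic valuation `i`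
and `q`-adic valuation `j`. -/
structure TileRule (S : TileSystem α) (p q K : ℕ) (r₁ u₁ : ℕ → ZMod p) (r₂ u₂ : ℕ → ZMod q)
    (T : ℕ → α) : Prop where
  const : (∀ v ≤ K, u₁ v = u₁ 0) → (∀ v ≤ K, u₂ v = u₂ 0) → ∀ v ≤ K, T v = T 0
  V : IsInitiallyLinear u₁ → IsInitiallyLinear u₂ → u₁ (2 * p) = 2 * u₁ 1 → S.V (T 1) (T p)
  H : IsInitiallyLinear u₁ → IsInitiallyLinear u₂ → u₂ (2 * q) = 2 * u₂ 1 → S.H (T 1) (T q)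
  seed : r₁ 1 ≠ 0 → r₂ 1 ≠ 0 → S.seed (T 1)

theorem TileRule.swap {S : TileSystem α} {p q K : ℕ} {r₁ u₁ : ℕ → ZMod p} {r₂ u₂ : ℕ → ZMod q}
    {T : ℕ → α} (h : TileRule S p q K r₁ u₁ r₂ u₂ T) : TileRule S.swap q p K r₂ u₂ r₁ u₁ T where
  const h₂ h₁ := h.const h₁ h₂
  V h₂ h₁ := h.H h₁ h₂
  H h₂ h₁ := h.V h₁ h₂
  seed h₂ h₁ := h.seed h₁ h₂

section Skeleton

variable {p K k : ℕ} [Fact p.Prime] {r u : ℕ → ℤ → ZMod p} {m d c : ℤ} {i : ℕ}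

theorem IsSkeleton.digit_of_dvd (h : IsSkeleton p K (k + 1) r u) {v : ℕ} (hv : v ≤ K) (hi : i ≤ k)
    (hc : (c : ZMod p) ≠ 0) (hm : (p : ℤ) ^ (k + 1) ∣ m - p ^ i * c) : u v m = c := by
  obtain ⟨n, hn⟩ := hm
  obtain ⟨l, rfl⟩ := Nat.exists_eq_add_of_le hi
  obtain rfl : m = p ^ i * (c + p * (p ^ l * n)) := by linear_combination hn
  have cast_eq : ((c + p * (p ^ l * n) : ℤ) : ZMod p) = c := by simp
  rw [h.digit v hv i (by lia) _ (cast_eq ▸ hc), cast_eq]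

theorem IsSkeleton.diag_pow_mul (h : IsSkeleton p K (k + 1) r u) {e w : ℕ} (hv : p ^ e * w ≤ K)
    (hie : i + e ≤ k) (hw : (w : ZMod p) ≠ 0) (hc : (c : ZMod p) ≠ 0)
    (hm : (p : ℤ) ^ (k + 1) ∣ m) (hd : (p : ℤ) ^ (k + 1) ∣ d - p ^ i * c) :
    diag u m d (p ^ e * w) = w * c := by
  have split : m + (p ^ e * w : ℕ) * d - p ^ (i + e) * (w * c) =
      m + p ^ e * w * (d - p ^ i * c) := by
    push_cast
    ring
  have digit := h.digit_of_dvd (m := m + (p ^ e * w : ℕ) * d) hv hie (c := w * c)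
    (by push_cast; exact mul_ne_zero hw hc) (split ▸ hm.add (hd.mul_left _))
  simpa [diag] using digit

theorem IsSkeleton.isInitiallyLinear_diag (hp : 5 ≤ p) (hK : 3 ≤ K)
    (h : IsSkeleton p K (k + 1) r u) (hi : i ≤ k) (hc : (c : ZMod p) ≠ 0)
    (hm : (p : ℤ) ^ (k + 1) ∣ m) (hd : (p : ℤ) ^ (k + 1) ∣ d - p ^ i * c) :
    IsInitiallyLinear (diag u m d) := by
  have value (w : ℕ) (hw₀ : w ≠ 0) (hw : w ≤ 3) : diag u m d w = w * c := by
    simpa using h.diag_pow_mul (e := 0) (w := w) (by lia) hi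
      (natCast_ne_zero_of_lt hw₀ (by lia)) hc hm hd
  constructor <;> rw [value 1, value] <;> simp

end Skeleton

theorem exists_dvd_sub_of_isCoprime {R : Type*} [CommRing R] {x y : R} (h : IsCoprime x y)
    (a b : R) : ∃ c, x ∣ c - a ∧ y ∣ c - b := by
  obtain ⟨s, t, hst⟩ := h
  refine ⟨a * (t * y) + b * (s * x), ⟨(b - a) * s, ?_⟩, ⟨(a - b) * t, ?_⟩⟩
  · linear_combination a * hst
  · linear_combination b * hst

section HostsTiles

variable {S : TileSystem α} {p q K k : ℕ} {b : ℤ} {r₁ u₁ : ℕ → ℤ → ZMod p}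
  {r₂ u₂ : ℕ → ℤ → ZMod q} {T : ℕ → ℤ → α}

/-- A layer of tiles over a `p`-adic and a `q`-adic skeleton, centred at the same origin, that obeys
`TileRule` on all progressions of common difference at least `b`. -/
structure HostsTiles (S : TileSystem α) (p q K k : ℕ) (b : ℤ) (r₁ u₁ : ℕ → ℤ → ZMod p)
    (r₂ u₂ : ℕ → ℤ → ZMod q) (T : ℕ → ℤ → α) : Prop where
  left : IsSkeleton p K k r₁ u₁
  right : IsSkeleton q K k r₂ u₂
  rule : ∀ m d : ℤ, b ≤ d →
    TileRule S p q K (diag r₁ m d) (diag u₁ m d) (diag r₂ m d) (diag u₂ m d) (diag T m d)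

theorem HostsTiles.swap (h : HostsTiles S p q K k b r₁ u₁ r₂ u₂ T) :
    HostsTiles S.swap q p K k b r₂ u₂ r₁ u₁ T :=
  ⟨h.right, h.left, fun m d hd => (h.rule m d hd).swap⟩

variable [Fact p.Prime] [Fact q.Prime]

theorem intCast_prime_pow_ne_zero (hpq : p ≠ q) (j : ℕ) : ((q ^ j : ℤ) : ZMod p) ≠ 0 := by
  suffices (q : ZMod p) ≠ 0 by simpa using pow_ne_zero j this
  rwa [Ne, ZMod.natCast_eq_zero_iff, Nat.prime_dvd_prime_iff_eq Fact.out Fact.out]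

theorem HostsTiles.tile_const (hpq : p ≠ q) (h : HostsTiles S p q K (k + 1) b r₁ u₁ r₂ u₂ T)
    {i j v : ℕ} (hi : i ≤ k) (hj : j ≤ k) (hv : v ≤ K) {m d : ℤ}
    (hm : (p * q : ℤ) ^ (k + 1) ∣ m - p ^ i * q ^ j) (hd : (p * q : ℤ) ^ (k + 1) ∣ d)
    (hbd : b ≤ d) : T v (m + v * d) = T 0 m := by
  have dvd (w : ℕ) : (p : ℤ) ^ (k + 1) * q ^ (k + 1) ∣ m + w * d - p ^ i * q ^ j := by
    rw [add_sub_right_comm, ← mul_pow]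
    exact hm.add (hd.mul_left _)
  have digit₁ (w : ℕ) (hw : w ≤ K) : diag u₁ m d w = (q ^ j : ℤ) :=
    h.left.digit_of_dvd hw hi (intCast_prime_pow_ne_zero hpq j) (dvd_of_mul_right_dvd (dvd w))
  have digit₂ (w : ℕ) (hw : w ≤ K) : diag u₂ m d w = (p ^ i : ℤ) :=
    h.right.digit_of_dvd hw hj (intCast_prime_pow_ne_zero hpq.symm i)
      (mul_comm ((p : ℤ) ^ i) _ ▸ dvd_of_mul_left_dvd (dvd w))
  have := (h.rule m d hbd).const (fun w hw => by rw [digit₁ w hw, digit₁ 0 K.zero_le])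
    (fun w hw => by rw [digit₂ w hw, digit₂ 0 K.zero_le]) v hv
  simpa [diag] using this

theorem one_le_mul_pow (k : ℕ) : (1 : ℤ) ≤ (p * q) ^ k :=
  one_le_pow₀ (mod_cast Nat.mul_pos (Fact.out : p.Prime).pos (Fact.out : q.Prime).pos)

theorem HostsTiles.tile_eq_of_dvd (hpq : p ≠ q) (h : HostsTiles S p q K (k + 1) b r₁ u₁ r₂ u₂ T)
    {i j v : ℕ} (hi : i ≤ k) (hj : j ≤ k) (hv₀ : 1 ≤ v) (hv : v ≤ K) {m : ℤ}
    (hm : (p * q : ℤ) ^ (k + 1) ∣ m - p ^ i * q ^ j) : T v m = T 1 (p ^ i * q ^ j) := by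
  set x : ℤ := p ^ i * q ^ j
  set D : ℤ := (p * q) ^ (k + 1) * (|b| + |m - x|)
  have hD : |b| + |m - x| ≤ D := le_mul_of_one_le_left (by positivity) (one_le_mul_pow _)
  have hvD : D ≤ v * D := le_mul_of_one_le_left (by positivity) (mod_cast hv₀)
  have dvd_D : (p * q : ℤ) ^ (k + 1) ∣ D := dvd_mul_right _ _
  have start : (p * q : ℤ) ^ (k + 1) ∣ m - v * D - x := by
    rw [sub_right_comm]
    exact hm.sub (dvd_D.mul_left _)
  have left := h.tile_const hpq hi hj hv start dvd_D (by grind)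
  have right := h.tile_const hpq hi hj (hv₀.trans hv) start (d := -(m - v * D - x)) start.neg_right
    (by grind)
  rw [sub_add_cancel] at left
  rw [left, ← right]
  congr 1
  push_cast
  ring

theorem HostsTiles.V (hpq : p ≠ q) (hp : 5 ≤ p) (hq : 5 ≤ q) (hpK : 2 * p ≤ K)
    (h : HostsTiles S p q K (k + 1) b r₁ u₁ r₂ u₂ T) {i j : ℕ} (hi : i < k) (hj : j < k) :
    S.V (T 1 (p ^ i * q ^ j)) (T 1 (p ^ (i + 1) * q ^ j)) := by
  set N : ℤ := (p * q) ^ (k + 1) * |b|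
  set d : ℤ := p ^ i * q ^ j + N
  have hbd : b ≤ d := calc
    b ≤ |b| := le_abs_self b
    _ ≤ N := le_mul_of_one_le_left (by positivity) (one_le_mul_pow _)
    _ ≤ d := by simp only [d]; linarith [show (0 : ℤ) ≤ p ^ i * q ^ j by positivity]
  have hN : (p : ℤ) ^ (k + 1) * q ^ (k + 1) ∣ N := by rw [← mul_pow]; exact dvd_mul_right _ _
  have hqj := intCast_prime_pow_ne_zero hpq j
  have value {e w : ℕ} (he : i + e ≤ k) (hw : p ^ e * w ≤ K) (hw₀ : (w : ZMod p) ≠ 0) :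
      diag u₁ (-N) d (p ^ e * w) = w * (q ^ j : ℤ) :=
    h.left.diag_pow_mul hw he hw₀ hqj (dvd_of_mul_right_dvd hN).neg_right
      (by simpa [d] using dvd_of_mul_right_dvd hN)
  have value_one : diag u₁ (-N) d 1 = (q ^ j : ℤ) := by
    simpa using value (e := 0) (w := 1) hi.le (by lia) (by simp)
  have value_two_mul := value (e := 1) (w := 2) hi (by lia)
    (natCast_ne_zero_of_lt two_ne_zero (by lia))
  have V := (h.rule (-N) d hbd).V
    (h.left.isInitiallyLinear_diag hp (by lia) hi.le hqj (dvd_of_mul_right_dvd hN).neg_right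
      (by simpa [d] using dvd_of_mul_right_dvd hN))
    (h.right.isInitiallyLinear_diag hq (by lia) hj.le (intCast_prime_pow_ne_zero hpq.symm i)
      (dvd_of_mul_left_dvd hN).neg_right
      (by simpa [d, mul_comm] using dvd_of_mul_left_dvd hN))
    (by rw [value_one, mul_comm]; simpa using value_two_mul)
  have next : T p (-N + p * d) = T 1 (p ^ (i + 1) * q ^ j) := by
    have split : -N + p * d - p ^ (i + 1) * q ^ j = (p - 1) * N := by ring
    exact h.tile_eq_of_dvd hpq hi hj.le (Fact.out : p.Prime).one_le (by lia)
      (split ▸ (mul_pow (p : ℤ) q _ ▸ hN).mul_left _)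
  simpa [diag, d, next] using V

theorem HostsTiles.isTiling (hpq : p ≠ q) (hp : 5 ≤ p) (hq : 5 ≤ q) (hpK : 2 * p ≤ K)
    (hqK : 2 * q ≤ K) (h : HostsTiles S p q K (k + 1) b r₁ u₁ r₂ u₂ T) :
    S.IsTiling k fun i j => T 1 (p ^ i * q ^ j) where
  seed := by
    have hp := h.left.residue 1 (by lia) 1
    have hq := h.right.residue 1 (by lia) 1
    have seed := (h.rule (1 - |b|) |b| (le_abs_self b)).seed
    simp only [diag, Nat.cast_one, one_mul, sub_add_cancel, hp, hq, Int.cast_one] at seed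
    simpa using seed one_ne_zero one_ne_zero
  V i hi j hj := h.V hpq hp hq hpK hi hj
  H i hi j hj := by
    have := h.swap.V hpq.symm hq hp hqK hj hi
    rwa [mul_comm, mul_comm ((q : ℤ) ^ (j + 1))] at this

end HostsTiles

section Tracks

variable {S : TileSystem α} {p q K : ℕ}

/-- The contents of a cell of a track: for two primes, the residue and the last nonzero digit of the
integer attached to the cell, and a tile. -/
structure Cell (p q : ℕ) (α : Type*) where
  r₁ : ZMod p
  u₁ : ZMod p
  r₂ : ZMod q
  u₂ : ZMod q
  tile : α

instance [NeZero p] [NeZero q] [Finite α] : Finite (Cell p q α) :=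
  .of_injective (fun c => (c.r₁, c.u₁, c.r₂, c.u₂, c.tile))
    fun ⟨_, _, _, _, _⟩ ⟨_, _, _, _, _⟩ h => by simpa using h

/-- The constraint on the cells read along a progression, of which those of index at most `K` are
looked at. -/
structure DiagRule (S : TileSystem α) (p q K : ℕ) (c : ℕ → Cell p q α) : Prop where
  left : SkeletonRule p K (fun v => (c v).r₁) fun v => (c v).u₁
  right : SkeletonRule q K (fun v => (c v).r₂) fun v => (c v).u₂
  tile : TileRule S p q K (fun v => (c v).r₁) (fun v => (c v).u₁) (fun v => (c v).r₂)
    (fun v => (c v).u₂) fun v => (c v).tile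

/-- The constraint on two consecutive cells of a track. -/
structure StepRule (c c' : Cell p q α) : Prop where
  left : c'.r₁ = c.r₁ + 1
  right : c'.r₂ = c.r₂ + 1

variable [Fact p.Prime] [Fact q.Prime]

theorem exists_isTiling (hpq : p ≠ q) (hp : 5 ≤ p) (hq : 5 ≤ q) (hpK : 2 * p ≤ K)
    (hqK : 2 * q ≤ K) {g : ℕ → ℤ → Cell p q α}
    (hdiag : ∀ m d : ℤ, 0 ≤ d → DiagRule S p q K (diag g m d))
    (hstep : ∀ v ≤ K, ∀ m, StepRule (g v m) (g v (m + 1))) (k : ℕ) :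
    ∃ tile, S.IsTiling k tile := by
  obtain ⟨A₁, B₁, h₁⟩ := exists_isSkeleton (r := fun v m => (g v m).r₁)
    (u := fun v m => (g v m).u₁) hp (by lia) (fun v hv m => (hstep v hv m).left)
    (fun m d hd => (hdiag m d hd).left) k
  obtain ⟨A₂, B₂, h₂⟩ := exists_isSkeleton (r := fun v m => (g v m).r₂)
    (u := fun v m => (g v m).u₂) hq (by lia) (fun v hv m => (hstep v hv m).right)
    (fun m d hd => (hdiag m d hd).right) k
  have coprime : IsCoprime ((p : ℤ) ^ (k + 1)) (q ^ (k + 1)) :=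
    (Nat.isCoprime_iff_coprime.2 ((Nat.coprime_primes Fact.out Fact.out).2 hpq)).pow
  obtain ⟨A, hA₁, hA₂⟩ := exists_dvd_sub_of_isCoprime coprime A₁ A₂
  obtain ⟨B, hB₁, hB₂⟩ := exists_dvd_sub_of_isCoprime coprime B₁ B₂
  have left := h₁.recenter_of_dvd hA₁ hB₁
  have right := h₂.recenter_of_dvd hA₂ hB₂
  simp only [recenter_recenter, add_sub_cancel] at left right
  have hosts : HostsTiles S p q K (k + 1) B _ _ _ _ (recenter A B fun v m => (g v m).tile) := {
    left, right,
    rule m d hd := by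
      simp only [diag_recenter]
      exact (hdiag (m - A) (d - B) (by lia)).tile }
  exact ⟨_, hosts.isTiling hpq hp hq hpK hqK⟩

theorem tileRule_V_padicValInt (hpq : p ≠ q) (hp : 5 ≤ p) (hq : 5 ≤ q) {tile : ℕ → ℕ → α}
    (htile : ∀ k, S.IsTiling k tile) {X D : ℤ} (hD : D ≠ 0) (hne : ∀ v : ℕ, X + v * D ≠ 0)
    (h₁ : IsInitiallyLinear fun v => lastDigit p (X + v * D))
    (h₂ : IsInitiallyLinear fun v => lastDigit q (X + v * D))
    (h : lastDigit p (X + (2 * p : ℕ) * D) = 2 * lastDigit p (X + D)) :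
    S.V (tile (padicValInt p (X + D)) (padicValInt q (X + D)))
      (tile (padicValInt p (X + p * D)) (padicValInt q (X + p * D))) := by
  obtain ⟨i, hi, hi'⟩ := h₁.exists_padicValInt_eq hp hD hne
  obtain ⟨j, hj, -⟩ := h₂.exists_padicValInt_eq hq hD hne
  have hi := hi 1 (by simp)
  have hj₁ := hj 1 (by simp)
  have hjp := hj p (by simpa using intCast_prime_pow_ne_zero hpq.symm 1)
  rw [Nat.cast_one, one_mul] at hi hj₁
  rw [hi, hj₁, hi' h, hjp]
  exact (htile (i + j + 1)).V i (by lia) j (by lia)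

theorem tileRule_padicValInt (hpq : p ≠ q) (hp : 5 ≤ p) (hq : 5 ≤ q) (hK : 2 ≤ K)
    {tile : ℕ → ℕ → α} (htile : ∀ k, S.IsTiling k tile) {X D : ℤ} (hD : D ≠ 0)
    (hne : ∀ v : ℕ, X + v * D ≠ 0) :
    TileRule S p q K (fun v => (X + v * D : ℤ)) (fun v => lastDigit p (X + v * D))
      (fun v => (X + v * D : ℤ)) (fun v => lastDigit q (X + v * D))
      (fun v => tile (padicValInt p (X + v * D)) (padicValInt q (X + v * D))) where
  const h₁ h₂ v _ := by
    obtain ⟨i, hi⟩ := exists_padicValInt_eq_of_lastDigit_eq hp hD hne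
      (by simpa using h₁ 1 (by lia)) (by simpa using h₁ 2 hK)
    obtain ⟨j, hj⟩ := exists_padicValInt_eq_of_lastDigit_eq hq hD hne
      (by simpa using h₂ 1 (by lia)) (by simpa using h₂ 2 hK)
    simp only [hi, hj]
  V h₁ h₂ h := by
    simpa using tileRule_V_padicValInt hpq hp hq htile hD hne h₁ h₂ (by simpa using h)
  H h₁ h₂ h := by
    simpa [TileSystem.swap] using
      tileRule_V_padicValInt hpq.symm hq hp (fun k => (htile k).swap) hD hne h₂ h₁
        (by simpa using h)
  seed h₁ h₂ := by
    rw [padicValInt_eq_zero h₁, padicValInt_eq_zero h₂]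
    exact (htile 0).seed

theorem exists_tracks_of_isTiling (hpq : p ≠ q) (hp : 5 ≤ p) (hq : 5 ≤ q) (hK : 2 ≤ K)
    {tile : ℕ → ℕ → α} (htile : ∀ k, S.IsTiling k tile) :
    ∃ g : ℕ → ℤ → Cell p q α, (∀ m d : ℤ, 0 ≤ d → DiagRule S p q K (diag g m d)) ∧
      (∀ v m, StepRule (g v m) (g v (m + 1))) ∧ ∀ v m, ∃ i j, (g v m).tile = tile i j := by
  -- Any affine form `n ↦ s * n + 1` without integer root would do; `s = 1` modulo `p` and `q`
  -- makes the residues increase by `1`.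
  set s : ℤ := p * q + 1
  have hs : 1 < s := by
    have : (0 : ℤ) < p * q := mod_cast Nat.mul_pos (by lia) (by lia)
    lia
  let y (v : ℕ) (m : ℤ) : ℤ := s * (m + v) + 1
  have y_diag (m d : ℤ) (v : ℕ) : y v (m + v * d) = s * m + 1 + v * (s * (d + 1)) := by
    simp only [y]
    ring
  have y_ne_zero (v : ℕ) (m : ℤ) : y v m ≠ 0 := by
    intro h
    have : s ∣ 1 := ⟨-(m + v), by linarith⟩
    exact hs.not_ge (Int.le_of_dvd one_pos this)
  let cell (n : ℤ) : Cell p q α :=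
    ⟨n, lastDigit p n, n, lastDigit q n, tile (padicValInt p n) (padicValInt q n)⟩
  refine ⟨fun v m => cell (y v m), fun m d hd => ?_, fun v m => ?_, fun v m => ⟨_, _, rfl⟩⟩
  · have hD : s * (d + 1) ≠ 0 := mul_ne_zero (by lia) (by lia)
    have hne (v : ℕ) : s * m + 1 + v * (s * (d + 1)) ≠ 0 := y_diag m d v ▸ y_ne_zero _ _
    rw [show diag (fun v m => cell (y v m)) m d = _ from
      funext fun v => congrArg cell (y_diag m d v)]
    exact ⟨skeletonRule_lastDigit hp K hD hne, skeletonRule_lastDigit hq K hD hne,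
      tileRule_padicValInt hpq hp hq hK htile hD hne⟩
  · constructor <;> simp [cell, y, s] <;> ring

end Tracks

end Tilings

/-! ### Space-time diagrams of multi-stack machines -/

section StackMachine

theorem eval_dom_iff_exists_iterate_eq_none {σ : Type*} (f : σ → Option σ) (a : σ) :
    (StateTransition.eval f a).Dom ↔ ∃ n, (fun o : Option σ => o.bind f)^[n] (some a) = none := by
  constructor
  · intro h
    obtain ⟨reaches, halts⟩ := StateTransition.mem_eval.1 (Part.get_mem h)
    have : ∀ b, StateTransition.Reaches f a b →
        ∃ n, (fun o : Option σ => o.bind f)^[n] (some a) = some b := by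
      intro b hb
      induction hb with
      | refl => exact ⟨0, rfl⟩
      | tail _ hbc ih =>
        obtain ⟨n, hn⟩ := ih
        exact ⟨n + 1, by rw [Function.iterate_succ_apply', hn]; exact hbc⟩
    obtain ⟨n, hn⟩ := this _ reaches
    exact ⟨n + 1, by rw [Function.iterate_succ_apply', hn]; exact halts⟩
  · rintro ⟨n, hn⟩
    induction n generalizing a with
    | zero => exact absurd hn (Option.some_ne_none a)
    | succ n ih =>
      rw [Function.iterate_succ_apply, Option.bind_some] at hn
      cases hfa : f a with
      | none => exact Part.dom_iff_mem.2 ⟨a, StateTransition.mem_eval.2 ⟨.refl, hfa⟩⟩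
      | some b =>
        rw [StateTransition.reaches_eval (.single hfa)]
        exact ih b (hfa ▸ hn)

/-- An operation on the top of a stack. -/
inductive StackOp (Γ : Type*)
  | keep
  | pop
  | push (a : Γ)

namespace StackOp

variable {Γ : Type*}

/-- The effect of an operation on a stack, given as the list of its letters, the top first. -/
def apply : StackOp Γ → List Γ → List Γ
  | keep, l => l
  | pop, l => l.tail
  | push a, l => a :: l

/-- The letter of a stack at a given depth after an operation, computed from the letters at the
neighbouring depths; `isTop` says that the depth is `0`, in which case `prev` is irrelevant. -/
def newCell (isTop : Bool) (prev cur next : Option Γ) : StackOp Γ → Option Γ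
  | keep => cur
  | pop => next
  | push a => if isTop then some a else prev

theorem getElem?_apply (op : StackOp Γ) (l : List Γ) (i : ℕ) :
    (op.apply l)[i]? = op.newCell (i = 0) l[i - 1]? l[i]? l[i + 1]? := by
  cases op <;> cases i <;> simp [apply, newCell]

end StackOp

/-- A deterministic machine with states `Q` and stacks indexed by `κ` over the alphabet `Γ`: its
transition function reads the tops of the stacks, and either halts or moves to a new state and
performs an operation on every stack. -/
abbrev StackMachine (Q κ Γ : Type*) : Type _ := Q → (κ → Option Γ) → Option (Q × (κ → StackOp Γ))

variable {Q κ Γ : Type*}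

/-- The partial successor function of a stack machine on pairs of a state and a family of
stacks. -/
def StackMachine.step (M : StackMachine Q κ Γ) (c : Q × (κ → List Γ)) :
    Option (Q × (κ → List Γ)) :=
  (M c.1 fun k => (c.2 k).head?).map fun x => (x.1, fun k => (x.2 k).apply (c.2 k))

/-- The finite part of a tile of the space-time diagram of a stack machine. The tile at depth `i`
and time `t` carries the state and the tops of the stacks at time `t` together with the letters
of all stacks at the depths `i - 1`, `i` and `i + 1`. -/
@[ext]
structure Tile (Q κ Γ : Type*) where
  isTop : Bool
  isInitial : Bool
  state : Q
  tops : κ → Option Γ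
  prev : κ → Option Γ
  cur : κ → Option Γ
  next : κ → Option Γ

instance [Finite Q] [Finite κ] [Finite Γ] : Finite (Tile Q κ Γ) :=
  .of_injective (fun t => (t.isTop, t.isInitial, t.state, t.tops, t.prev, t.cur, t.next))
    fun _ _ h => by simpa [Tile.ext_iff] using h

namespace Tile

/-- The tile at depth `i` of the configuration `c`. -/
def ofConfig (isInitial : Bool) (c : Q × (κ → List Γ)) (i : ℕ) : Tile Q κ Γ where
  isTop := i = 0
  isInitial := isInitial
  state := c.1
  tops k := (c.2 k).head?
  prev k := (c.2 k)[i - 1]?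
  cur k := (c.2 k)[i]?
  next k := (c.2 k)[i + 1]?

/-- The constraint on the tiles of equal depth at consecutive times. -/
structure Precedes (M : StackMachine Q κ Γ) (t t' : Tile Q κ Γ) : Prop where
  isTop : t'.isTop = t.isTop
  isInitial : t'.isInitial = false
  step : ∃ x, M t.state t.tops = some x ∧ t'.state = x.1 ∧
    t'.cur = fun k => (x.2 k).newCell t.isTop (t.prev k) (t.cur k) (t.next k)

/-- The constraint on the tiles of consecutive depths at equal times. -/
structure Above (t t' : Tile Q κ Γ) : Prop where
  isTop : t'.isTop = false
  isInitial : t'.isInitial = t.isInitial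
  state : t'.state = t.state
  tops : t'.tops = t.tops
  prev : t'.prev = t.cur
  next : t.next = t'.cur
  tops_of_isTop : t.isTop → t.tops = t.cur
  prev_of_isTop : t.isTop → t.prev = t.cur

theorem precedes_ofConfig {M : StackMachine Q κ Γ} {c c' : Q × (κ → List Γ)}
    (h : M.step c = some c') (b : Bool) (i : ℕ) :
    Precedes M (ofConfig b c i) (ofConfig false c' i) := by
  obtain ⟨x, hx, rfl⟩ := Option.map_eq_some_iff.1 h
  exact ⟨rfl, rfl, x, hx, rfl, funext fun k => (x.2 k).getElem?_apply _ i⟩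

theorem above_ofConfig (b : Bool) (c : Q × (κ → List Γ)) (i : ℕ) :
    Above (ofConfig b c i) (ofConfig b c (i + 1)) where
  isTop := by simp [ofConfig]
  isInitial := rfl
  state := rfl
  tops := rfl
  prev := rfl
  next := rfl
  tops_of_isTop h := by
    obtain rfl : i = 0 := by simpa [ofConfig] using h
    simp [ofConfig, List.head?_eq_getElem?]
  prev_of_isTop h := by
    obtain rfl : i = 0 := by simpa [ofConfig] using h
    rfl

theorem Precedes.exists_step {M : StackMachine Q κ Γ} {c : Q × (κ → List Γ)} {b : Bool} {i : ℕ}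
    {t : Tile Q κ Γ} (h : Precedes M (ofConfig b c i) t) :
    ∃ c', M.step c = some c' ∧ t.state = c'.1 ∧ t.cur = fun k => (c'.2 k)[i]? := by
  obtain ⟨x, hx, state, cur⟩ := h.step
  refine ⟨_, Option.map_eq_some_iff.2 ⟨x, hx, rfl⟩, state, ?_⟩
  exact cur.trans (funext fun k => ((x.2 k).getElem?_apply _ i).symm)

theorem eq_ofConfig_of_above {t : ℕ → Tile Q κ Γ} {c : Q × (κ → List Γ)} {n : ℕ}
    (isTop : (t 0).isTop) (state : (t 0).state = c.1) (above : ∀ i < n, Above (t i) (t (i + 1)))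
    (cur : ∀ i ≤ n, (t i).cur = fun k => (c.2 k)[i]?) {i : ℕ} (hi : i < n) :
    t i = ofConfig (t 0).isInitial c i := by
  induction i with
  | zero =>
    have tops := (above 0 hi).tops_of_isTop isTop
    have prev := (above 0 hi).prev_of_isTop isTop
    have next := (above 0 hi).next
    rw [cur 0 hi.le] at tops prev
    rw [cur 1 hi] at next
    ext1 <;> simp_all [ofConfig, List.head?_eq_getElem?]
  | succ i ih =>
    have previous := above i (by lia)
    have cur' := cur (i + 1) hi.le
    have next := (above (i + 1) hi).next.trans (cur (i + 2) hi)
    have := ih (by lia)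
    obtain ⟨isTop, isInitial, state, tops, prev, -, -, -⟩ := previous
    ext1 <;> simp_all [ofConfig]

end Tile

section TileSystem

variable [DecidableEq κ] (M : StackMachine Q κ Γ) (q₀ : Q) (k₀ : κ)

/-- The start configuration of a stack machine on the input `l`: the stack `k₀` holds `l` and the
other stacks are empty. -/
def StackMachine.init (q₀ : Q) (k₀ : κ) (l : List Γ) : Q × (κ → List Γ) :=
  (q₀, Function.update (fun _ => []) k₀ l)

/-- The constraint on a tile of the start configuration, where `a` is the letter of the input at
the depth of the tile. -/
structure Tile.IsStart (a : Option Γ) (t : Tile Q κ Γ) : Prop where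
  state : t.state = q₀
  cur : t.cur = Function.update (fun _ => none) k₀ a

/-- The tile system of the space-time diagrams of a stack machine started on the input `l`, depth
being the second coordinate. A tile also carries the minimum of its depth and the length of `l`,
which gives the constraint on the start configuration access to the letters of `l`. -/
def StackMachine.tileSystem (l : List Γ) : TileSystem (Tile Q κ Γ × ℕ) where
  V t t' := t.1.Precedes M t'.1 ∧ t'.2 = t.2
  H t t' := t.1.Above t'.1 ∧ t'.2 = min (t.2 + 1) l.length ∧
    (t.1.isInitial → t.1.IsStart q₀ k₀ l[t.2]?)
  seed t := t.1.isTop ∧ t.1.isInitial ∧ t.2 = 0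

variable {M q₀ k₀} {l : List Γ} {k : ℕ} {tile : ℕ → ℕ → Tile Q κ Γ × ℕ}

theorem getElem?_init (i : ℕ) :
    (fun k => ((StackMachine.init q₀ k₀ l).2 k)[i]?) =
      Function.update (fun _ => none) k₀ l[i]? := by
  funext k
  by_cases hk : k = k₀
  · subst hk
    simp [StackMachine.init]
  · simp [StackMachine.init, hk]

theorem getElem?_min_length (l : List Γ) (i : ℕ) : l[min i l.length]? = l[i]? := by
  rcases le_total i l.length with h | h <;> simp [h]

theorem TileSystem.IsTiling.isTop (h : (M.tileSystem q₀ k₀ l).IsTiling k tile) {t : ℕ}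
    (ht : t < k) : (tile t 0).1.isTop := by
  induction t with
  | zero => exact h.seed.1
  | succ t ih => exact (h.V t (by lia) 0 (by lia)).1.isTop.trans (ih (by lia))

theorem TileSystem.IsTiling.counter_zero (h : (M.tileSystem q₀ k₀ l).IsTiling k tile) {i : ℕ}
    (hi : i < k) : (tile 0 i).1.isInitial ∧ (tile 0 i).2 = min i l.length := by
  induction i with
  | zero => simpa using h.seed.2
  | succ i ih =>
    obtain ⟨above, counter, -⟩ := h.H 0 (by lia) i (by lia)
    obtain ⟨isInitial, counter'⟩ := ih (by lia)
    exact ⟨above.isInitial.trans isInitial, by lia⟩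

theorem TileSystem.IsTiling.isStart (h : (M.tileSystem q₀ k₀ l).IsTiling k tile) {i : ℕ}
    (hi : i < k) : (tile 0 i).1.IsStart q₀ k₀ l[i]? := by
  obtain ⟨isInitial, counter⟩ := h.counter_zero hi
  rw [← getElem?_min_length, ← counter]
  exact (h.H 0 (by lia) i hi).2.2 isInitial

/-- Each step loses one depth, because the tiles of the last depth are not constrained by their
right neighbours. -/
theorem TileSystem.IsTiling.exists_iterate_step (h : (M.tileSystem q₀ k₀ l).IsTiling k tile)
    {t : ℕ} (ht : t < k) :
    ∃ c, (fun o => o.bind M.step)^[t] (some (StackMachine.init q₀ k₀ l)) = some c ∧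
      ∀ i, t + 1 + i < k → (tile t i).1 = .ofConfig (tile t 0).1.isInitial c i := by
  induction t with
  | zero =>
    refine ⟨_, rfl, fun i hi => ?_⟩
    exact Tile.eq_ofConfig_of_above (t := fun i => (tile 0 i).1) (n := k - 1) (h.isTop ht)
      (h.isStart ht).state (fun i hi => (h.H 0 ht i (by lia)).1)
      (fun i hi => (h.isStart (by lia : i < k)).cur.trans (getElem?_init i).symm) (by lia)
  | succ t ih =>
    obtain ⟨c, hc, row⟩ := ih (by lia)
    have step (i : ℕ) (hi : t + 1 + i < k) :
        ∃ c', M.step c = some c' ∧ (tile (t + 1) i).1.state = c'.1 ∧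
          (tile (t + 1) i).1.cur = fun k => (c'.2 k)[i]? :=
      (row i hi ▸ (h.V t (by lia) i (by lia)).1).exists_step
    obtain ⟨c', hc', state, -⟩ := step 0 ht
    refine ⟨c', by rw [Function.iterate_succ_apply', hc]; exact hc', fun i hi => ?_⟩
    refine Tile.eq_ofConfig_of_above (t := fun i => (tile (t + 1) i).1) (n := k - t - 2)
      (h.isTop ht) state (fun i hi => (h.H _ ht i (by lia)).1) (fun i hi => ?_) (by lia)
    obtain ⟨c'', hc'', -, cur⟩ := step i (by lia)
    exact cur.trans (by rw [Option.some_injective _ (hc'.symm.trans hc'')])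

theorem not_eval_dom_of_isTiling
    (h : ∀ k, ∃ tile, (M.tileSystem q₀ k₀ l).IsTiling k tile) :
    ¬ (StateTransition.eval M.step (StackMachine.init q₀ k₀ l)).Dom := by
  rw [eval_dom_iff_exists_iterate_eq_none]
  rintro ⟨n, hn⟩
  obtain ⟨tile, htile⟩ := h (n + 1)
  obtain ⟨c, hc, -⟩ := htile.exists_iterate_step n.lt_succ_self
  simp [hc] at hn

theorem exists_isTiling_of_not_eval_dom
    (h : ¬ (StateTransition.eval M.step (StackMachine.init q₀ k₀ l)).Dom) :
    ∃ tile, (∀ k, (M.tileSystem q₀ k₀ l).IsTiling k tile) ∧ ∀ t i, (tile t i).2 ≤ l.length := by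
  simp only [eval_dom_iff_exists_iterate_eq_none, not_exists, ← ne_eq,
    Option.ne_none_iff_exists'] at h
  choose c hc using h
  have hc₀ : c 0 = StackMachine.init q₀ k₀ l := Option.some_injective _ (hc 0).symm
  have step (t : ℕ) : M.step (c t) = some (c (t + 1)) := by
    rw [← hc (t + 1), Function.iterate_succ_apply', hc t, Option.bind_some]
  refine ⟨fun t i => (.ofConfig (t = 0) (c t) i, min i l.length), fun k => ⟨?_, ?_, ?_⟩,
    fun _ _ => min_le_right _ _⟩
  · simp [StackMachine.tileSystem, Tile.ofConfig]
  · exact fun t _ i _ => ⟨by simpa using Tile.precedes_ofConfig (step t) (t = 0) i, rfl⟩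
  · refine fun t _ i _ => ⟨Tile.above_ofConfig _ _ _, by lia, fun ht => ?_⟩
    obtain rfl : t = 0 := by simpa [Tile.ofConfig] using ht
    rw [getElem?_min_length, hc₀]
    exact ⟨rfl, getElem?_init i⟩

end TileSystem

end StackMachine

/-! ### A universal multi-stack machine -/

section Restrict

variable {Q κ Γ : Type*}

/-- The restriction of a stack machine to a set of states that is closed under its transitions. -/
def StackMachine.restrict (M : StackMachine Q κ Γ) (s : Set Q)
    (hs : ∀ q ∈ s, ∀ a, ∀ x ∈ M q a, x.1 ∈ s) : StackMachine s κ Γ :=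
  fun q a => (M q a).pmap (fun x hx => (⟨x.1, hx⟩, x.2)) (hs q q.2 a)

theorem StackMachine.eval_restrict_dom (M : StackMachine Q κ Γ) {s : Set Q}
    (hs : ∀ q ∈ s, ∀ a, ∀ x ∈ M q a, x.1 ∈ s) (q : s) (T : κ → List Γ) :
    (StateTransition.eval (M.restrict s hs).step (q, T)).Dom ↔
      (StateTransition.eval M.step (q, T)).Dom := by
  let inclusion (c : s × (κ → List Γ)) : Q × (κ → List Γ) := (c.1, c.2)
  have respects : StateTransition.Respects (M.restrict s hs).step M.step
      fun c d => inclusion c = d := by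
    refine StateTransition.fun_respects.2 fun ⟨q, T⟩ => ?_
    cases hq : M q fun k => (T k).head? with
    | none => simp [StackMachine.step, restrict, hq, StateTransition.FRespects, inclusion]
    | some x =>
      simp only [StackMachine.step, restrict, hq, Option.pmap_some, Option.map_some,
        StateTransition.FRespects]
      exact .single (by simp [StackMachine.step, hq, inclusion])
  exact (StateTransition.tr_eval_dom respects rfl).symm

end Restrict

section MicroStep

open Turing

universe u

variable {κ Γ Λ σ : Type u} [DecidableEq κ]

/-- The stack machine executing one instruction of a program of Mathlib's `TM2` model at a time.
Its states are the remaining statement, or `none` once the program has halted, together with the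
internal state of the program. -/
def microStep (P : Λ → TM2.Stmt (fun _ : κ => Γ) Λ σ) :
    StackMachine (Option (TM2.Stmt (fun _ : κ => Γ) Λ σ) × σ) κ Γ
  | (some (.push k f q), v), _ => some ((q, v), Function.update (fun _ => .keep) k (.push (f v)))
  | (some (.peek k f q), v), a => some ((q, f v (a k)), fun _ => .keep)
  | (some (.pop k f q), v), a => some ((q, f v (a k)), Function.update (fun _ => .keep) k .pop)
  | (some (.load f q), v), _ => some ((q, f v), fun _ => .keep)
  | (some (.branch f q₁ q₂), v), _ => some ((some (cond (f v) q₁ q₂), v), fun _ => .keep)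
  | (some (.goto f), v), _ => some ((P (f v), v), fun _ => .keep)
  | (some .halt, v), _ => some ((none, v), fun _ => .keep)
  | (none, _), _ => none

/-- The configuration of `microStep P` corresponding to a configuration of the program `P`. -/
def microConfig (P : Λ → TM2.Stmt (fun _ : κ => Γ) Λ σ) (c : TM2.Cfg (fun _ : κ => Γ) Λ σ) :
    (Option (TM2.Stmt (fun _ : κ => Γ) Λ σ) × σ) × (κ → List Γ) :=
  ((c.l.map P, c.var), c.stk)

theorem apply_update_keep (op : StackOp Γ) (k : κ) (S : κ → List Γ) :
    (fun k' => (Function.update (fun _ => StackOp.keep) k op k').apply (S k')) =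
      Function.update S k (op.apply (S k)) := by
  funext k'
  by_cases h : k' = k
  · subst h
    simp
  · simp [h, StackOp.apply]

theorem reaches₁_microConfig_stepAux (P : Λ → TM2.Stmt (fun _ : κ => Γ) Λ σ)
    (q : TM2.Stmt (fun _ : κ => Γ) Λ σ) (v : σ) (S : κ → List Γ) :
    StateTransition.Reaches₁ (microStep P).step ((some q, v), S)
      (microConfig P (TM2.stepAux q v S)) := by
  induction q generalizing v S with
  | push k f q ih =>
    exact .head (congrArg (fun S => some ((some q, v), S)) (apply_update_keep _ k S)) (ih v _)
  | pop k f q ih =>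
    exact .head (congrArg (fun S => some ((some q, f v _), S)) (apply_update_keep _ k S)) (ih _ _)
  | branch f q₁ q₂ ih₁ ih₂ =>
    rw [TM2.stepAux]
    cases h : f v
    · exact .head (by simp [StackMachine.step, microStep, h, StackOp.apply]) (ih₂ v S)
    · exact .head (by simp [StackMachine.step, microStep, h, StackOp.apply]) (ih₁ v S)
  | peek k f q ih => exact .head rfl (ih _ _)
  | load f q ih => exact .head rfl (ih _ _)
  | goto f => exact .single rfl
  | halt => exact .single rfl

theorem eval_microStep_dom (P : Λ → TM2.Stmt (fun _ : κ => Γ) Λ σ)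
    (c : TM2.Cfg (fun _ : κ => Γ) Λ σ) :
    (StateTransition.eval (microStep P).step (microConfig P c)).Dom ↔
      (StateTransition.eval (TM2.step P) c).Dom := by
  have respects : StateTransition.Respects (TM2.step P) (microStep P).step
      fun c d => microConfig P c = d := by
    refine StateTransition.fun_respects.2 fun ⟨l, v, S⟩ => ?_
    cases l with
    | none => rfl
    | some l => exact reaches₁_microConfig_stepAux P (P l) v S
  exact StateTransition.tr_eval_dom respects rfl

theorem microStep_mem_stmts [Inhabited Λ] {P : Λ → TM2.Stmt (fun _ : κ => Γ) Λ σ} {s : Finset Λ}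
    (hs : TM2.Supports P s) (q : Option (TM2.Stmt (fun _ : κ => Γ) Λ σ) × σ)
    (hq : q.1 ∈ TM2.stmts P s) (a : κ → Option Γ) :
    ∀ x ∈ microStep P q a, x.1.1 ∈ TM2.stmts P s := by
  obtain ⟨_ | q, v⟩ := q
  · simp [microStep]
  · have trans {q'} (h : q' ∈ TM2.stmts₁ q) : some q' ∈ TM2.stmts P s := TM2.stmts_trans h hq
    cases q with
    | goto f =>
      have : f v ∈ s := TM2.stmts_supportsStmt hs hq v
      simpa [microStep, TM2.stmts] using ⟨_, this, TM2.stmts₁_self⟩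
    | halt => simp [microStep, TM2.stmts]
    | branch f q₁ q₂ =>
      simp only [microStep, Option.mem_some_iff, forall_eq']
      exact trans (by cases f v <;> simp [TM2.stmts₁, TM2.stmts₁_self])
    | _ =>
      simp only [microStep, Option.mem_some_iff, forall_eq']
      exact trans (by simp [TM2.stmts₁, TM2.stmts₁_self])

theorem exists_finite_stackMachine [Inhabited Λ] [Finite σ]
    {P : Λ → TM2.Stmt (fun _ : κ => Γ) Λ σ} {s : Finset Λ} (hs : TM2.Supports P s) (v : σ) :
    ∃ (Q : Type u) (_ : Finite Q) (M : StackMachine Q κ Γ) (q₀ : Q), ∀ T : κ → List Γ,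
      (StateTransition.eval M.step (q₀, T)).Dom ↔
        (StateTransition.eval (TM2.step P) ⟨some default, v, T⟩).Dom := by
  let states : Set (Option (TM2.Stmt (fun _ : κ => Γ) Λ σ) × σ) :=
    (TM2.stmts P s : Set (Option (TM2.Stmt (fun _ : κ => Γ) Λ σ))) ×ˢ Set.univ
  have finite : Finite states := (TM2.stmts P s).finite_toSet.prod Set.finite_univ
  have closed : ∀ q ∈ states, ∀ a, ∀ x ∈ microStep P q a, x.1 ∈ states :=
    fun q hq a x hx => ⟨microStep_mem_stmts hs q hq.1 a x hx, trivial⟩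
  have start : some (P default) ∈ TM2.stmts P s := by
    simpa [TM2.stmts] using ⟨_, hs.1, TM2.stmts₁_self⟩
  exact ⟨states, finite, (microStep P).restrict states closed, ⟨(_, v), start, trivial⟩,
    fun T => (StackMachine.eval_restrict_dom _ closed _ T).trans
      (eval_microStep_dom P ⟨some default, v, T⟩)⟩

end MicroStep

section Universal

open Turing Turing.PartrecToTM2

theorem exists_stackMachine_of_partrec {f : ℕ →. ℕ} (hf : Partrec f) :
    ∃ (Q : Type) (_ : Finite Q) (M : StackMachine Q K' Γ') (q₀ : Q), ∀ n,
      (StateTransition.eval M.step (StackMachine.init q₀ K'.main (trList [n]))).Dom ↔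
        (f n).Dom := by
  have hf' : Partrec fun v : List.Vector ℕ 1 => f v.head :=
    hf.comp Primrec.vector_head.to_comp
  obtain ⟨c, hc⟩ := ToPartrec.Code.exists_code (Nat.Partrec'.of_part hf')
  let _ : Inhabited Λ' := ⟨trNormal c Cont'.halt⟩
  obtain ⟨Q, hQ, M, q₀, hM⟩ := exists_finite_stackMachine (tr_supports c Cont'.halt) none
  refine ⟨Q, hQ, M, q₀, fun n => ?_⟩
  have init_eq : StackMachine.init q₀ K'.main (trList [n]) =
      (q₀, K'.elim (trList [n]) [] [] []) := by
    refine Prod.ext rfl (funext fun k => ?_)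
    cases k <;> simp [StackMachine.init, K'.elim]
  have dom_iff : (c.eval [n]).Dom ↔ (f n).Dom :=
    iff_of_eq (congrArg Part.Dom (hc ⟨[n], rfl⟩))
  rw [init_eq, ← dom_iff]
  exact (hM _).trans (iff_of_eq (congrArg Part.Dom (tr_eval c [n])))

theorem trNat_add_self_add_one (n : ℕ) : trNat (n + n + 1) = Γ'.bit1 :: trNat n := by
  rw [trNat, trNat, Nat.cast_succ, Nat.cast_add, Num.bit1_of_bit1]
  cases (n : Num) <;> rfl

theorem trNat_two_pow_sub_one (k : ℕ) : trNat (2 ^ k - 1) = List.replicate k Γ'.bit1 := by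
  induction k with
  | zero => exact trNat_zero
  | succ k ih =>
    have : 2 ^ (k + 1) - 1 = (2 ^ k - 1) + (2 ^ k - 1) + 1 := by
      have := Nat.one_le_two_pow (n := k)
      lia
    rw [this, trNat_add_self_add_one, ih, List.replicate_succ]

theorem exists_partrec_two_pow_sub_one :
    ∃ f : ℕ →. ℕ, Partrec f ∧
      ∀ c : Nat.Partrec.Code, f (2 ^ Encodable.encode c - 1) = c.eval 0 := by
  have log : Primrec fun m : ℕ => m.findGreatest (fun k => 2 ^ k ≤ m + 1) :=
    Primrec.nat_findGreatest .id <| Primrec.nat_le.comp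
      ((Primrec₂.unpaired'.1 Nat.Primrec.pow).comp (.const 2) .snd) (Primrec.succ.comp .fst)
  refine ⟨fun m => ((Encodable.decode (m.findGreatest (fun k => 2 ^ k ≤ m + 1)) :
      Option Nat.Partrec.Code) : Part Nat.Partrec.Code).bind (·.eval 0),
    (Computable.ofOption (Computable.decode.comp log.to_comp)).bind
      (Nat.Partrec.Code.eval_part.comp Computable.snd (Computable.const 0)), fun c => ?_⟩
  have log_eq (k : ℕ) : (2 ^ k - 1).findGreatest (fun j => 2 ^ j ≤ 2 ^ k - 1 + 1) = k := by
    rw [Nat.findGreatest_eq_iff, Nat.sub_add_cancel Nat.one_le_two_pow]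
    exact ⟨Nat.le_sub_one_of_lt k.lt_two_pow_self, fun _ => le_rfl,
      fun j hj _ => (Nat.pow_lt_pow_right one_lt_two hj).not_ge⟩
  simp only [log_eq, Encodable.encodek, Part.coe_some, Part.bind_some]

/-- The input is unary so as to depend on the program in a simple way. -/
theorem exists_universal_stackMachine :
    ∃ (Q : Type) (_ : Finite Q) (M : StackMachine Q K' Γ') (q₀ : Q), ∀ c : Nat.Partrec.Code,
      (StateTransition.eval M.step (StackMachine.init q₀ K'.main
        (List.replicate (Encodable.encode c) Γ'.bit1 ++ [Γ'.cons]))).Dom ↔ (c.eval 0).Dom := by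
  obtain ⟨f, hf, f_eq⟩ := exists_partrec_two_pow_sub_one
  obtain ⟨Q, hQ, M, q₀, hM⟩ := exists_stackMachine_of_partrec hf
  refine ⟨Q, hQ, M, q₀, fun c => ?_⟩
  rw [← trNat_two_pow_sub_one, ← f_eq c]
  exact hM _

end Universal

/-! ### Tracks moving at different speeds -/

section Block

variable {β : Type*} {w : ℕ} [NeZero w]

/-- The `n`-th row in two horizontally adjacent blocks of `w` rows each. -/
def readRow (c r : Fin w → Fin w → β) (n : ℕ) : Fin w → β :=
  (if n < w then c else r) (Fin.ofNat w n)

/-- A block and its right neighbour satisfy the constraint `Loc` on each row of the block and the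
constraint `Adj` on horizontally adjacent entries of each track. -/
def IsConsistent (Loc : (Fin w → β) → Prop) (Adj : β → β → Prop) (c r : Fin w → Fin w → β) :
    Prop :=
  (∀ s, Loc (c s)) ∧ ∀ s v, Adj (c s v) (readRow c r (s + 1) v)

/-- The block obtained from a block and its right neighbour by moving track `v` by `v` positions to
the left. -/
def shear (c r : Fin w → Fin w → β) : Fin w → Fin w → β :=
  fun s v => readRow c r (s + v) v

/-- The block at position `i` and time `t`, when each track `g v` moves to the left with speed
`v`. -/
def trackBlock (g : Fin w → ℤ → β) (t : ℕ) (i : ℤ) : Fin w → Fin w → β :=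
  fun s v => g v (i * w + s + v * t)

theorem readRow_trackBlock (g : Fin w → ℤ → β) (t : ℕ) (i : ℤ) {n : ℕ} (hn : n < 2 * w)
    (v : Fin w) :
    readRow (trackBlock g t i) (trackBlock g t (i + 1)) n v = g v (i * w + n + v * t) := by
  unfold readRow trackBlock
  split_ifs with h
  · simp [Nat.mod_eq_of_lt h]
  · obtain ⟨n, rfl⟩ := Nat.exists_eq_add_of_le (not_lt.1 h)
    simp only [Fin.val_ofNat, Nat.add_mod_left, Nat.mod_eq_of_lt (show n < w by lia)]
    congr 1
    push_cast
    ring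

theorem shear_trackBlock (g : Fin w → ℤ → β) (t : ℕ) (i : ℤ) :
    shear (trackBlock g t i) (trackBlock g t (i + 1)) = trackBlock g (t + 1) i := by
  funext s v
  rw [shear, readRow_trackBlock g t i (by lia), trackBlock]
  congr 1
  push_cast
  ring

theorem exists_trackBlock_zero_eq (c : ℤ → Fin w → Fin w → β) :
    ∃ g : Fin w → ℤ → β, trackBlock g 0 = c := by
  refine ⟨fun v m => c (Int.divModEquiv w m).1 (Int.divModEquiv w m).2 v, ?_⟩
  funext i s v
  have : Int.divModEquiv w (i * w + s) = (i, s) := (Int.divModEquiv w).apply_symm_apply (i, s)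
  simp [trackBlock, this]

variable {Loc : (Fin w → β) → Prop} {Adj : β → β → Prop}

theorem forall_isConsistent_trackBlock_iff {g : Fin w → ℤ → β} :
    (∀ t i, IsConsistent Loc Adj (trackBlock g t i) (trackBlock g t (i + 1))) ↔
      (∀ m d : ℤ, 0 ≤ d → Loc fun v => g v (m + v * d)) ∧ ∀ v m, Adj (g v m) (g v (m + 1)) := by
  have isConsistent_iff (t : ℕ) (i : ℤ) :
      IsConsistent Loc Adj (trackBlock g t i) (trackBlock g t (i + 1)) ↔
        (∀ s : Fin w, Loc fun v => g v (i * w + s + v * t)) ∧ ∀ s v : Fin w,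
          Adj (g v (i * w + s + v * t)) (g v (i * w + s + v * t + 1)) := by
    refine and_congr Iff.rfl (forall₂_congr fun s v => ?_)
    rw [readRow_trackBlock g t i (by lia), trackBlock, Nat.cast_succ, ← add_assoc,
      add_right_comm _ (1 : ℤ)]
  simp only [isConsistent_iff]
  constructor
  · refine fun h => ⟨fun m d hd => ?_, fun v m => ?_⟩ <;>
      obtain ⟨⟨i, s⟩, rfl⟩ := (Int.divModEquiv w).symm.surjective m
    · lift d to ℕ using hd
      exact (h d i).1 s
    · simpa using (h 0 i).2 s v
  · exact fun h t i => ⟨fun s => h.1 _ _ (Nat.cast_nonneg t), fun s v => h.2 v _⟩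

end Block

section BlockRule

variable {β : Type*} {w N : ℕ} [NeZero w]

open Classical in
/-- The local rule whose nonblank states are blocks, through the enumeration `e`: inconsistent
neighbours produce a blank, and consistent ones move their tracks. -/
noncomputable def blockRule (e : (Fin w → Fin w → β) ≃ Fin N) (Loc : (Fin w → β) → Prop)
    (Adj : β → β → Prop) : Fin (N + 1) × Fin (N + 1) × Fin (N + 1) → Fin (N + 1) :=
  fun x => Fin.cases 0 (fun c => Fin.cases 0 (fun r =>
    if IsConsistent Loc Adj (e.symm c) (e.symm r) then (e (shear (e.symm c) (e.symm r))).succ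
    else 0) x.2.2) x.2.1

variable (e : (Fin w → Fin w → β) ≃ Fin N) (Loc : (Fin w → β) → Prop) (Adj : β → β → Prop)

theorem isSpreading_blockRule : IsSpreading (blockRule e Loc Adj) := by
  intro l c r h
  cases c using Fin.cases
  · exact absurd rfl h
  · cases r using Fin.cases
    · exact absurd rfl h
    · exact ⟨Fin.succ_ne_zero _, Fin.succ_ne_zero _⟩

open Classical in
theorem caOfRule_blockRule (b : ℤ → Fin w → Fin w → β) (i : ℤ) :
    caOfRule (blockRule e Loc Adj) (fun i => (e (b i)).succ) i =
      if IsConsistent Loc Adj (b i) (b (i + 1)) then (e (shear (b i) (b (i + 1)))).succ else 0 := by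
  simp [caOfRule, blockRule]

theorem isImmortal_blockRule_iff (g : Fin w → ℤ → β) :
    IsImmortal (blockRule e Loc Adj) (fun i => (e (trackBlock g 0 i)).succ) ↔
      ∀ t i, IsConsistent Loc Adj (trackBlock g t i) (trackBlock g t (i + 1)) := by
  have iterate_succ {t : ℕ} (i : ℤ)
      (h : (caOfRule (blockRule e Loc Adj))^[t] (fun i => (e (trackBlock g 0 i)).succ) =
        fun i => (e (trackBlock g t i)).succ) :=
    (congrFun (Function.iterate_succ_apply' (caOfRule (blockRule e Loc Adj)) t _) i).trans
      (h ▸ caOfRule_blockRule e Loc Adj (trackBlock g t) i)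
  simp only [shear_trackBlock] at iterate_succ
  have iterate_eq (t : ℕ)
      (h : ∀ s < t, ∀ i, IsConsistent Loc Adj (trackBlock g s i) (trackBlock g s (i + 1))) :
      (caOfRule (blockRule e Loc Adj))^[t] (fun i => (e (trackBlock g 0 i)).succ) =
        fun i => (e (trackBlock g t i)).succ := by
    induction t with
    | zero => rfl
    | succ t ih =>
      exact funext fun i => (iterate_succ i (ih fun s hs => h s (hs.trans t.lt_succ_self))).trans
        (if_pos (h t t.lt_succ_self i))
  constructor
  · intro h t
    induction t using Nat.strong_induction_on with
    | _ t ih =>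
      by_contra! ⟨i, hi⟩
      exact h (t + 1) i ((iterate_succ i (iterate_eq t ih)).trans (if_neg hi))
  · intro h t i
    rw [iterate_eq t fun s _ => h s]
    exact Fin.succ_ne_zero _

theorem exists_isImmortal_blockRule_iff :
    (∃ x, IsImmortal (blockRule e Loc Adj) x) ↔
      ∃ g : Fin w → ℤ → β, (∀ m d : ℤ, 0 ≤ d → Loc fun v => g v (m + v * d)) ∧
        ∀ v m, Adj (g v m) (g v (m + 1)) := by
  simp only [← forall_isConsistent_trackBlock_iff, ← isImmortal_blockRule_iff e]
  refine ⟨fun ⟨x, hx⟩ => ?_, fun ⟨g, hg⟩ => ⟨_, hg⟩⟩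
  have ne_zero (i : ℤ) : x i ≠ 0 := hx 0 i
  obtain ⟨g, hg⟩ := exists_trackBlock_zero_eq fun i => e.symm ((x i).pred (ne_zero i))
  have x_eq : (fun i => (e (trackBlock g 0 i)).succ) = x := by simp [hg]
  exact ⟨g, x_eq ▸ hx⟩

end BlockRule

section Digits

variable {w B : ℕ}

/-- Blocks of base `B` digits are enumerated by the numbers that they represent. -/
def digitEquiv (w B : ℕ) : (Fin w → Fin w → Fin B) ≃ Fin (B ^ (w * w)) :=
  ((Equiv.curry _ _ _).symm.trans (Equiv.arrowCongr finProdFinEquiv (.refl _))).trans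
    finFunctionFinEquiv

theorem digitEquiv_apply (y : Fin w → Fin w → Fin B) :
    (digitEquiv w B y : ℕ) = ∑ j : Fin (w * w), (y j.divNat j.modNat : ℕ) * B ^ (j : ℕ) := by
  simp [digitEquiv, finProdFinEquiv]

theorem digitEquiv_symm_apply (k : Fin (B ^ (w * w))) (s v : Fin w) :
    ((digitEquiv w B).symm k s v : ℕ) = k / B ^ (v + w * s : ℕ) % B := by
  simp [digitEquiv, finFunctionFinEquiv_symm_apply_val, finProdFinEquiv]

end Digits

/-! ### Codes of local rules -/

section Encode

open Encodable

theorem encode_eq_encode_map {α : Type*} [Encodable α] (l : List α) :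
    encode l = encode (l.map fun x => encode x) := by
  induction l with
  | nil => rfl
  | cons x l ih => simp only [List.map_cons, encode_list_cons, ih, encode_nat]

theorem encode_finPi_const {β : Type*} [Encodable β] {n : ℕ} (f : Fin n → β) :
    (finPi n fun _ => β).encode f =
      encode (List.ofFn fun i : Fin n => Nat.pair i (encode (f i))) := calc
  _ = encode (List.Vector.ofFn fun i => (⟨i, f i⟩ : Σ _ : Fin n, β)).toList := rfl
  _ = _ := by
    rw [List.Vector.toList_ofFn, encode_eq_encode_map, List.map_ofFn]
    rfl

variable {α β : Type*} [Fintype α] [Encodable α] [Encodable β]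

theorem val_fintypeEquivFin_getElem_sortedUniv {i : ℕ} (hi : i < (sortedUniv α).length) :
    (fintypeEquivFin (sortedUniv α)[i] : ℕ) = i := by
  let := decidableEqOfEncodable α
  have val_cast {m n : ℕ} (h : m = n) (j : Fin m) :
      (Equiv.cast (congrArg Fin h) j : ℕ) = j := by
    subst h
    rfl
  exact (val_cast (length_sortedUniv α) _).trans (congrArg Fin.val (Equiv.symm_apply_apply
    ((sortedUniv_nodup α).getEquivOfForallMemList _ mem_sortedUniv) ⟨i, hi⟩))

theorem encode_fintypeArrow (f : α → β) :
    fintypeArrowOfEncodable.encode f =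
      encode ((sortedUniv α).mapIdx fun i x => Nat.pair i (encode (f x))) := calc
  _ = (finPi _ fun _ => β).encode fun i => f (fintypeEquivFin.symm i) := rfl
  _ = _ := by
    rw [encode_finPi_const]
    congr 1
    refine List.ext_getElem (by simp) fun i _ hi => ?_
    have symm_eq {h} : fintypeEquivFin.symm ⟨i, h⟩ = (sortedUniv α)[i]'(by simpa using hi) :=
      fintypeEquivFin.symm_apply_eq.2 (Fin.ext (val_fintypeEquivFin_getElem_sortedUniv _).symm)
    simp only [List.getElem_ofFn, List.getElem_mapIdx, symm_eq]

theorem map_encode_sortedUniv (N : ℕ) (p : ℕ → Prop) [DecidablePred p]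
    (hp : ∀ c, (∃ x : α, encode x = c) ↔ c < N ∧ p c) :
    (sortedUniv α).map encode = (List.range N).filter p := by
  refine List.Pairwise.eq_of_mem_iff (r := (· < ·)) ?_
    (List.Pairwise.filter _ List.pairwise_lt_range) fun c => by simpa using hp c
  rw [List.pairwise_map]
  have sorted := Finset.pairwise_sort (Finset.univ : Finset α) (encode' α ⁻¹'o (· ≤ ·))
  exact (sorted.and (sortedUniv_nodup α)).imp fun h =>
    lt_of_le_of_ne h.1 fun heq => h.2 (encode_injective heq)

theorem map_encode_sortedUniv_fin_prod (m : ℕ) :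
    (sortedUniv (Fin m × Fin m × Fin m)).map encode =
      (List.range (Nat.pair m (Nat.pair m m))).filter fun c =>
        c.unpair.1 < m ∧ c.unpair.2.unpair.1 < m ∧ c.unpair.2.unpair.2 < m := by
  have encode_fin (x : Fin m) : encode x = x := rfl
  refine map_encode_sortedUniv _ _ fun c => ⟨?_, fun ⟨_, hx, hy, hz⟩ => ?_⟩
  · rintro ⟨⟨x, y, z⟩, rfl⟩
    have pair_lt_pair {a b c d : ℕ} (hac : a < c) (hbd : b < d) : Nat.pair a b < Nat.pair c d :=
      (Nat.pair_lt_pair_left b hac).trans (Nat.pair_lt_pair_right c hbd)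
    simpa [encode_fin] using pair_lt_pair x.2 (pair_lt_pair y.2 z.2)
  · exact ⟨(⟨_, hx⟩, ⟨_, hy⟩, ⟨_, hz⟩), by simp [encode_fin]⟩

theorem primrec_map_encode_sortedUniv_fin_prod :
    Primrec fun m => (sortedUniv (Fin m × Fin m × Fin m)).map encode := by
  simp only [map_encode_sortedUniv_fin_prod]
  have bound : Primrec fun m => Nat.pair m (Nat.pair m m) :=
    Primrec₂.natPair.comp .id (Primrec₂.natPair.comp .id .id)
  refine (PrimrecRel.listFilter (R := fun c m => c.unpair.1 < m ∧ c.unpair.2.unpair.1 < m ∧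
    c.unpair.2.unpair.2 < m) ?_).comp (Primrec.list_range.comp bound) .id
  have fst : Primrec fun x : ℕ × ℕ => x.1.unpair := Primrec.unpair.comp .fst
  have snd : Primrec fun x : ℕ × ℕ => x.1.unpair.2.unpair :=
    Primrec.unpair.comp (Primrec.snd.comp fst)
  exact (Primrec.nat_lt.comp (Primrec.fst.comp fst) .snd).and
    ((Primrec.nat_lt.comp (Primrec.fst.comp snd) .snd).and
      (Primrec.nat_lt.comp (Primrec.snd.comp snd) .snd))

theorem primrec_list_mapIdx {γ δ σ : Type*} [Primcodable γ] [Primcodable δ] [Primcodable σ]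
    [Inhabited δ] {l : γ → List δ} {f : γ → ℕ → δ → σ} (hl : Primrec l)
    (hf : Primrec₂ fun a (x : ℕ × δ) => f a x.1 x.2) :
    Primrec fun a => (l a).mapIdx (f a) := by
  have map_range : Primrec fun a => (List.range (l a).length).map fun i => f a i ((l a).getI i) :=
    Primrec.list_map (Primrec.list_range.comp (Primrec.list_length.comp hl))
      (hf.comp .fst (Primrec.pair .snd (Primrec.list_getI.comp (hl.comp .fst) .snd)))
  refine map_range.of_eq fun a => List.ext_getElem (by simp) fun i _ hi => ?_
  simp [List.getI_eq_getElem (l a) (n := i) (by simpa using hi)]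

theorem primrec_encode_localRule {γ : Type*} [Primcodable γ] {N : γ → ℕ} (hN : Primrec N)
    {f : ∀ a, Fin (N a + 1) × Fin (N a + 1) × Fin (N a + 1) → Fin (N a + 1)}
    {F : γ → ℕ → ℕ → ℕ} (hF : Primrec fun x : γ × ℕ × ℕ => F x.1 x.2.1 x.2.2)
    (h : ∀ a x, (f a x : ℕ) = F a x.2.1 x.2.2) :
    Primrec fun a => encode (⟨N a, f a⟩ :
      Σ n : ℕ, (Fin (n + 1) × Fin (n + 1) × Fin (n + 1) → Fin (n + 1))) := by
  let codes (m : ℕ) : List ℕ := (sortedUniv (Fin m × Fin m × Fin m)).map encode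
  let value (a : γ) (i c : ℕ) : ℕ := Nat.pair i (F a c.unpair.2.unpair.1 c.unpair.2.unpair.2)
  have encode_eq (a) : encode (f a) = encode ((codes (N a + 1)).mapIdx (value a)) := by
    refine (encode_fintypeArrow (f a)).trans (congrArg encode ?_)
    have pair_apply (i x) : Nat.pair i (encode (f a x)) = value a i (encode x) := by
      obtain ⟨x₁, x₂, x₃⟩ := x
      simp only [value, encode_prod_val, Nat.unpair_pair]
      exact congrArg _ (h a (x₁, x₂, x₃))
    exact List.ext_getElem (by simp [codes]) fun i _ _ => by simp [codes, pair_apply]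
  have codes_primrec : Primrec fun a => codes (N a + 1) :=
    primrec_map_encode_sortedUniv_fin_prod.comp (Primrec.succ.comp hN)
  have unpair_primrec : Primrec fun x : γ × ℕ × ℕ => x.2.2.unpair.2.unpair :=
    Primrec.unpair.comp (Primrec.snd.comp (Primrec.unpair.comp (Primrec.snd.comp .snd)))
  have value_primrec : Primrec₂ fun a (x : ℕ × ℕ) => value a x.1 x.2 :=
    Primrec₂.natPair.comp (Primrec.fst.comp .snd)
      (hF.comp (Primrec.pair .fst unpair_primrec))
  exact (Primrec₂.natPair.comp hN (Primrec.encode.comp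
    (primrec_list_mapIdx codes_primrec value_primrec))).of_eq fun a =>
      congrArg (Nat.pair (N a)) (encode_eq a).symm

end Encode

/-! ### Primitive recursive families of block rules -/

section Primrec

variable {α σ : Type*} [Primcodable α] [Primcodable σ]

theorem primrecPred_const (p : Prop) : PrimrecPred fun _ : α => p := by
  classical
  exact (Primrec.eq.comp (.const (decide p)) (.const true)).of_eq (by simp)

theorem primrecPred_imp {p q : α → Prop} (hp : PrimrecPred p) (hq : PrimrecPred q) :
    PrimrecPred fun a => p a → q a :=
  (hp.not.or hq).of_eq fun _ => imp_iff_not_or.symm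

theorem primrecPred_forall {ι : Type*} [Finite ι] {p : ι → α → Prop}
    (hp : ∀ i, PrimrecPred (p i)) : PrimrecPred fun a => ∀ i, p i a := by
  classical
  have := Fintype.ofFinite ι
  suffices ∀ s : Finset ι, PrimrecPred fun a => ∀ i ∈ s, p i a by
    simpa using this Finset.univ
  intro s
  induction s using Finset.induction_on with
  | empty => simpa using primrecPred_const True
  | insert i s _ ih => simpa only [Finset.forall_mem_insert] using (hp i).and ih

theorem primrec_sum {ι : Type*} (s : Finset ι) {f : ι → α → ℕ} (hf : ∀ i, Primrec (f i)) :
    Primrec fun a => ∑ i ∈ s, f i a := by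
  classical
  induction s using Finset.induction_on with
  | empty => simpa using Primrec.const 0
  | insert i s hi ih => simpa only [Finset.sum_insert hi] using Primrec.nat_add.comp (hf i) ih

theorem primrec_pow : Primrec₂ fun a n : ℕ => a ^ n :=
  Primrec₂.unpaired'.1 Nat.Primrec.pow

variable {n : ℕ}

theorem primrec_pi {f : α → Fin n → σ} (hf : ∀ i, Primrec fun a => f a i) : Primrec f :=
  Primrec.fin_curry.2 (Primrec₂.swap (Primrec.fin_curry₁.2 hf))

theorem primrec_apply {f : α → Fin n → σ} (hf : Primrec f) (i : Fin n) :
    Primrec fun a => f a i :=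
  Primrec.fin_app.comp hf (.const i)

end Primrec

section DigitRule

open Encodable

variable {w : ℕ} [NeZero w]

section Map

variable {β γ : Type*} (φ : β → γ) (c r : Fin w → Fin w → β)

theorem readRow_map (n : ℕ) (v : Fin w) :
    readRow (fun s v => φ (c s v)) (fun s v => φ (r s v)) n v = φ (readRow c r n v) := by
  unfold readRow
  split_ifs <;> rfl

theorem shear_map (s v : Fin w) :
    shear (fun s v => φ (c s v)) (fun s v => φ (r s v)) s v = φ (shear c r s v) :=
  readRow_map φ c r _ v

theorem isConsistent_map_iff {Loc : (Fin w → γ) → Prop} {Adj : γ → γ → Prop} :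
    IsConsistent (fun x => Loc fun v => φ (x v)) (fun d d' => Adj (φ d) (φ d')) c r ↔
      IsConsistent Loc Adj (fun s v => φ (c s v)) (fun s v => φ (r s v)) := by
  simp only [IsConsistent, readRow_map]

end Map

/-- The block rule on blocks of base `B` digits, enumerated by the numbers that they represent. -/
noncomputable def digitRule (B : ℕ) (Loc : (Fin w → ℕ) → Prop) (Adj : ℕ → ℕ → Prop) :
    Fin (B ^ (w * w) + 1) × Fin (B ^ (w * w) + 1) × Fin (B ^ (w * w) + 1) →
      Fin (B ^ (w * w) + 1) :=
  blockRule (digitEquiv w B) (fun x => Loc fun v => (x v : ℕ)) fun a b => Adj a b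

/-- The block of base `B` digits represented by a number. -/
def digits (w B k : ℕ) : Fin w → Fin w → ℕ :=
  fun s v => k / B ^ (v + w * s : ℕ) % B

open Classical in
/-- The block rule `digitRule` as a function of the numbers of the central and the right state. -/
noncomputable def digitRuleValue (B : ℕ) (Loc : (Fin w → ℕ) → Prop) (Adj : ℕ → ℕ → Prop)
    (k l : ℕ) : ℕ :=
  if (k ≠ 0 ∧ l ≠ 0) ∧ IsConsistent Loc Adj (digits w B (k - 1)) (digits w B (l - 1)) then
    ∑ j : Fin (w * w),
      shear (digits w B (k - 1)) (digits w B (l - 1)) j.divNat j.modNat * B ^ (j : ℕ) + 1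
  else 0

theorem val_digitRule (B : ℕ) (Loc : (Fin w → ℕ) → Prop) (Adj : ℕ → ℕ → Prop) (x) :
    (digitRule B Loc Adj x : ℕ) = digitRuleValue B Loc Adj x.2.1 x.2.2 := by
  classical
  obtain ⟨-, k, l⟩ := x
  cases k using Fin.cases with
  | zero => simp [digitRule, blockRule, digitRuleValue]
  | succ k =>
    cases l using Fin.cases with
    | zero => simp [digitRule, blockRule, digitRuleValue]
    | succ l =>
      have digits_eq (k : Fin (B ^ (w * w))) :
          digits w B k = fun s v => ((digitEquiv w B).symm k s v : ℕ) :=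
        funext₂ fun s v => (digitEquiv_symm_apply k s v).symm
      simp only [digitRule, blockRule, digitRuleValue, Fin.cases_succ, Fin.val_succ,
        Nat.add_sub_cancel, digits_eq, shear_map, apply_ite Fin.val, Fin.val_zero,
        digitEquiv_apply]
      exact if_congr ((isConsistent_map_iff _ _ _).trans (by simp)) rfl rfl

section Primrec

variable {α : Type*} [Primcodable α]

omit [NeZero w] in
theorem primrec_digits {B k : α → ℕ} (hB : Primrec B) (hk : Primrec k) :
    Primrec fun a => digits w (B a) (k a) :=
  primrec_pi fun _ => primrec_pi fun _ => Primrec.nat_mod.comp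
    (Primrec.nat_div.comp hk (primrec_pow.comp hB (.const _))) hB

theorem primrec_readRow {c r : α → Fin w → Fin w → ℕ} (hc : Primrec c) (hr : Primrec r) (n : ℕ) :
    Primrec fun a => readRow (c a) (r a) n := by
  unfold readRow
  split_ifs
  · exact primrec_apply hc _
  · exact primrec_apply hr _

variable {Loc : α → (Fin w → ℕ) → Prop} {Adj : ℕ → ℕ → Prop} {B : α → ℕ}

theorem primrec_digitRuleValue (hB : Primrec B) (hLoc : PrimrecRel Loc) (hAdj : PrimrecRel Adj) :
    Primrec fun x : α × ℕ × ℕ => digitRuleValue (B x.1) (Loc x.1) Adj x.2.1 x.2.2 := by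
  classical
  have hB : Primrec fun x : α × ℕ × ℕ => B x.1 := hB.comp .fst
  have hk : Primrec fun x : α × ℕ × ℕ => x.2.1 := Primrec.fst.comp .snd
  have hl : Primrec fun x : α × ℕ × ℕ => x.2.2 := Primrec.snd.comp .snd
  have hc := primrec_digits (w := w) hB (Primrec.pred.comp hk)
  have hr := primrec_digits (w := w) hB (Primrec.pred.comp hl)
  refine Primrec.ite ?_ (Primrec.succ.comp (primrec_sum _ fun j => ?_)) (.const 0)
  · refine ((Primrec.eq.comp hk (.const 0)).not.and (Primrec.eq.comp hl (.const 0)).not).and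
      (.and (primrecPred_forall fun s => hLoc.comp .fst (primrec_apply hc s))
        (primrecPred_forall fun s => primrecPred_forall fun v => hAdj.comp
          (primrec_apply (primrec_apply hc s) v) (primrec_apply (primrec_readRow hc hr _) v)))
  · exact Primrec.nat_mul.comp (primrec_apply (primrec_readRow hc hr _) _)
      (primrec_pow.comp hB (.const _))

theorem primrec_encode_digitRule (hB : Primrec B) (hLoc : PrimrecRel Loc)
    (hAdj : PrimrecRel Adj) :
    Primrec fun a => encode (⟨B a ^ (w * w), digitRule (B a) (Loc a) Adj⟩ :
      Σ n : ℕ, (Fin (n + 1) × Fin (n + 1) × Fin (n + 1) → Fin (n + 1))) :=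
  primrec_encode_localRule (primrec_pow.comp hB (.const _))
    (primrec_digitRuleValue hB hLoc hAdj) fun a => val_digitRule (B a) (Loc a) Adj

end Primrec

end DigitRule

/-! ### The block rule of a tile system -/

section TileDigits

variable {p q K A : ℕ} [NeZero A] {τ : Type*} (e : Cell p q τ ≃ Fin A)

/-- The cell obtained from `c` by attaching the counter `n` to its tile. -/
def Cell.withCounter (c : Cell p q τ) (n : ℕ) : Cell p q (τ × ℕ) :=
  ⟨c.r₁, c.u₁, c.r₂, c.u₂, (c.tile, n)⟩

/-- The cell with a counter that is represented by a number `d`: the cell is given by `d % A` and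
the counter by `d / A`. -/
def cellOfDigit (d : ℕ) : Cell p q (τ × ℕ) :=
  (e.symm (Fin.ofNat A d)).withCounter (d / A)

/-- `DiagRule` for cells that are represented by numbers. -/
def DigitDiagRule (S : TileSystem (τ × ℕ)) (x : Fin (K + 1) → ℕ) : Prop :=
  DiagRule S p q K fun v => cellOfDigit e (x (Fin.ofNat (K + 1) v))

/-- `StepRule` for cells that are represented by numbers. -/
def DigitStepRule (d d' : ℕ) : Prop :=
  StepRule (cellOfDigit e d) (cellOfDigit e d')

theorem exists_cellOfDigit_eq {b : ℕ} (c : Cell p q (τ × ℕ)) (hc : c.tile.2 ≤ b) :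
    ∃ d < A * (b + 1), cellOfDigit e d = c := by
  set a := e ⟨c.r₁, c.u₁, c.r₂, c.u₂, c.tile.1⟩ with ha
  have hmod : Fin.ofNat A (a + A * c.tile.2) = a := by
    ext
    simp [Nat.mod_eq_of_lt a.2]
  have hdiv : (a + A * c.tile.2) / A = c.tile.2 := by
    rw [Nat.add_mul_div_left _ _ (NeZero.pos A), Nat.div_eq_of_lt a.2, zero_add]
  refine ⟨a + A * c.tile.2, ?_, ?_⟩
  · nlinarith [a.2, Nat.mul_le_mul_left A hc]
  · rw [cellOfDigit, hmod, hdiv, ha, e.symm_apply_apply, Cell.withCounter]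

theorem SkeletonRule.congr {r u r' u' : ℕ → ZMod p} (hp : 3 ≤ p) (hr : ∀ v ≤ K, r v = r' v)
    (hu : ∀ v ≤ K, u v = u' v) (h : SkeletonRule p K r u) : SkeletonRule p K r' u' where
  ne_zero v hv := hu v hv ▸ h.ne_zero v hv
  eq_residue v hv := hu v hv ▸ hr v hv ▸ h.eq_residue v hv
  residue_step v hv := by
    rw [← hr _ hv, ← hr _ (by lia), ← hr v (by lia)]
    exact h.residue_step v hv
  three_term v hv := by
    rw [← hu _ hv, ← hu _ (by lia), ← hu v (by lia)]
    exact h.three_term v hv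
  jump v hv := by
    rw [← hu _ hv, ← hu (v + 1) (by lia), ← hu (v + 2) (by lia), ← hu (v + 3) (by lia),
      ← hu v (by lia)]
    exact h.jump v hv

theorem IsInitiallyLinear.congr {R : Type*} [Semiring R] {u u' : ℕ → R} (hu : ∀ v ≤ 3, u v = u' v)
    (h : IsInitiallyLinear u) : IsInitiallyLinear u' := by
  unfold IsInitiallyLinear
  rw [← hu 1 (by lia), ← hu 2 (by lia), ← hu 3 (by lia)]
  exact h

theorem DiagRule.congr {α : Type*} {S : TileSystem α} {c c' : ℕ → Cell p q α} (hp : 3 ≤ p)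
    (hq : 3 ≤ q) (hpK : 2 * p ≤ K) (hqK : 2 * q ≤ K) (hc : ∀ v ≤ K, c v = c' v)
    (h : DiagRule S p q K c) : DiagRule S p q K c' := by
  have hu₁ (v) (hv : v ≤ 3) : (c' v).u₁ = (c v).u₁ := by rw [hc v (by lia)]
  have hu₂ (v) (hv : v ≤ 3) : (c' v).u₂ = (c v).u₂ := by rw [hc v (by lia)]
  refine ⟨h.left.congr hp (fun v hv => by rw [hc v hv]) (fun v hv => by rw [hc v hv]),
    h.right.congr hq (fun v hv => by rw [hc v hv]) (fun v hv => by rw [hc v hv]), ?_, ?_, ?_, ?_⟩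
  · intro h₁ h₂ v hv
    rw [← hc v hv, ← hc 0 K.zero_le]
    refine h.tile.const (fun v hv => ?_) (fun v hv => ?_) v hv <;> rw [hc v hv, hc 0 K.zero_le]
    exacts [h₁ v hv, h₂ v hv]
  · intro h₁ h₂
    rw [← hc 1 (by lia), ← hc p (by lia), ← hc (2 * p) hpK]
    exact h.tile.V (h₁.congr hu₁) (h₂.congr hu₂)
  · intro h₁ h₂
    rw [← hc 1 (by lia), ← hc q (by lia), ← hc (2 * q) hqK]
    exact h.tile.H (h₁.congr hu₁) (h₂.congr hu₂)
  · rw [← hc 1 (by lia)]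
    exact h.tile.seed

section Immortal

variable {S : TileSystem (τ × ℕ)} [Fact p.Prime] [Fact q.Prime]

theorem exists_isTiling_of_isImmortal (hpq : p ≠ q) (hp : 5 ≤ p) (hq : 5 ≤ q) (hpK : 2 * p ≤ K)
    (hqK : 2 * q ≤ K) {B : ℕ}
    {x : ℤ → Fin (B ^ ((K + 1) * (K + 1)) + 1)}
    (hx : IsImmortal (digitRule B (DigitDiagRule (K := K) e S) (DigitStepRule e)) x) (k : ℕ) :
    ∃ tile, S.IsTiling k tile := by
  obtain ⟨g, hdiag, hstep⟩ := (exists_isImmortal_blockRule_iff _ _ _).1 ⟨x, hx⟩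
  refine exists_isTiling hpq hp hq hpK hqK
    (g := fun v m => cellOfDigit e (g (Fin.ofNat (K + 1) v) m)) (fun m d hd => ?_)
    (fun v _ => hstep _) k
  refine DiagRule.congr (by lia) (by lia) hpK hqK (fun v hv => ?_) (hdiag m d hd)
  simp only [diag, Fin.val_ofNat, Nat.mod_eq_of_lt (Nat.lt_succ_of_le hv)]

theorem exists_isImmortal_of_isTiling (hpq : p ≠ q) (hp : 5 ≤ p) (hq : 5 ≤ q) (hpK : 2 * p ≤ K)
    (hqK : 2 * q ≤ K) {tile : ℕ → ℕ → τ × ℕ} (htile : ∀ k, S.IsTiling k tile) {b : ℕ}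
    (hb : ∀ i j, (tile i j).2 ≤ b) :
    ∃ x, IsImmortal (digitRule (A * (b + 1)) (DigitDiagRule (K := K) e S) (DigitStepRule e)) x := by
  obtain ⟨g, hdiag, hstep, g_tile⟩ := exists_tracks_of_isTiling (K := K) hpq hp hq (by lia) htile
  have exists_digit (v : ℕ) (m : ℤ) : ∃ d < A * (b + 1), cellOfDigit e d = g v m := by
    obtain ⟨i, j, hij⟩ := g_tile v m
    exact exists_cellOfDigit_eq e _ (hij ▸ hb i j)
  choose d d_lt cell_d using exists_digit
  refine (exists_isImmortal_blockRule_iff _ _ _).2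
    ⟨fun v m => ⟨d v m, d_lt v m⟩, fun m δ hδ => ?_, fun v m => ?_⟩
  · refine DiagRule.congr (by lia) (by lia) hpK hqK (fun v hv => ?_) (hdiag m δ hδ)
    simp only [cell_d, diag, Fin.val_ofNat, Nat.mod_eq_of_lt (Nat.lt_succ_of_le hv)]
  · rw [DigitStepRule, cell_d, cell_d]
    exact hstep v m

end Immortal

end TileDigits

/-! ### Primitive recursive families of tile systems -/

section PrimrecTileSystem

variable {α τ : Type*} [Primcodable α]

theorem primrecPred_of_fiber {ι : Type*} [Finite ι] {φ : α → ι} {P : ι → α → Prop}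
    (hφ : ∀ i, PrimrecPred fun a => φ a = i) (hP : ∀ i, PrimrecPred (P i)) :
    PrimrecPred fun a => P (φ a) a :=
  (primrecPred_forall fun i => primrecPred_imp (hφ i) (hP i)).of_eq fun _ => forall_eq'

theorem primrecPred_const_imp (p : Prop) {q : α → Prop} (hq : PrimrecPred q) :
    PrimrecPred fun a => p → q a :=
  primrecPred_imp (primrecPred_const p) hq

/-- Primitive recursiveness of a family of tile systems whose tiles carry a counter, the part of a
tile other than its counter being regarded as finite. -/
structure PrimrecTileSystem (S : α → TileSystem (τ × ℕ)) : Prop where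
  V : ∀ t t', PrimrecPred fun x : α × ℕ × ℕ => (S x.1).V (t, x.2.1) (t', x.2.2)
  H : ∀ t t', PrimrecPred fun x : α × ℕ × ℕ => (S x.1).H (t, x.2.1) (t', x.2.2)
  seed : ∀ t, PrimrecPred fun x : α × ℕ => (S x.1).seed (t, x.2)

variable {S : α → TileSystem (τ × ℕ)} {p q K : ℕ}

theorem PrimrecTileSystem.tileRule (hS : PrimrecTileSystem S) (r₁ u₁ : ℕ → ZMod p)
    (r₂ u₂ : ℕ → ZMod q) (t : ℕ → τ) {n : ℕ → α → ℕ} (hn : ∀ v, Primrec (n v)) :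
    PrimrecPred fun a => TileRule (S a) p q K r₁ u₁ r₂ u₂ fun v => (t v, n v a) := by
  have const : PrimrecPred fun a => ∀ v ≤ K, (t v, n v a) = (t 0, n 0 a) := by
    refine (primrecPred_forall fun v : Fin (K + 1) => (primrecPred_const (t v = t 0)).and
      (Primrec.eq.comp (hn v) (hn 0))).of_eq fun a => ?_
    simp only [Fin.forall_iff, Nat.lt_succ_iff, Prod.mk.injEq]
  have V := (hS.V (t 1) (t p)).comp (Primrec.pair .id (.pair (hn 1) (hn p)))
  have H := (hS.H (t 1) (t q)).comp (Primrec.pair .id (.pair (hn 1) (hn q)))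
  have seed := (hS.seed (t 1)).comp (Primrec.pair .id (hn 1))
  exact ((primrecPred_const_imp _ (primrecPred_const_imp _ const)).and
    ((primrecPred_const_imp _ (primrecPred_const_imp _ (primrecPred_const_imp _ V))).and
    ((primrecPred_const_imp _ (primrecPred_const_imp _ (primrecPred_const_imp _ H))).and
    (primrecPred_const_imp _ (primrecPred_const_imp _ seed))))).of_eq
    fun a => ⟨fun ⟨h₁, h₂, h₃, h₄⟩ => ⟨h₁, h₂, h₃, h₄⟩,
      fun ⟨h₁, h₂, h₃, h₄⟩ => ⟨h₁, h₂, h₃, h₄⟩⟩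

theorem PrimrecTileSystem.diagRule (hS : PrimrecTileSystem S) (c : ℕ → Cell p q τ)
    {n : ℕ → α → ℕ} (hn : ∀ v, Primrec (n v)) :
    PrimrecPred fun a => DiagRule (S a) p q K fun v => (c v).withCounter (n v a) :=
  ((primrecPred_const (SkeletonRule p K (fun v => (c v).r₁) fun v => (c v).u₁)).and
    ((primrecPred_const (SkeletonRule q K (fun v => (c v).r₂) fun v => (c v).u₂)).and
    (hS.tileRule (fun v => (c v).r₁) (fun v => (c v).u₁) (fun v => (c v).r₂) (fun v => (c v).u₂)
      (fun v => (c v).tile) hn))).of_eq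
    fun _ => ⟨fun ⟨h₁, h₂, h₃⟩ => ⟨h₁, h₂, h₃⟩, fun ⟨h₁, h₂, h₃⟩ => ⟨h₁, h₂, h₃⟩⟩

variable {A : ℕ} [NeZero A] (e : Cell p q τ ≃ Fin A)

theorem primrecPred_ofNat_eq {f : α → ℕ} (hf : Primrec f) (i : Fin A) :
    PrimrecPred fun a => Fin.ofNat A (f a) = i :=
  (Primrec.eq.comp (Primrec.nat_mod.comp hf (.const A)) (.const (i : ℕ))).of_eq
    fun a => (Fin.ext_iff (a := Fin.ofNat A (f a))).symm

theorem PrimrecTileSystem.digitDiagRule (hS : PrimrecTileSystem S) :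
    PrimrecRel fun a => DigitDiagRule (K := K) e (S a) := by
  have digit (v : Fin (K + 1)) : Primrec fun x : α × (Fin (K + 1) → ℕ) => x.2 v :=
    primrec_apply .snd v
  have fiber (i : Fin (K + 1) → Fin A) :
      PrimrecPred fun x : α × (Fin (K + 1) → ℕ) => (fun v => Fin.ofNat A (x.2 v)) = i :=
    (primrecPred_forall fun v => primrecPred_ofNat_eq (digit v) (i v)).of_eq
      fun _ => funext_iff.symm
  have hS' : PrimrecTileSystem fun x : α × (Fin (K + 1) → ℕ) => S x.1 := {
    V t t' := (hS.V t t').comp (Primrec.pair (.comp .fst .fst) .snd)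
    H t t' := (hS.H t t').comp (Primrec.pair (.comp .fst .fst) .snd)
    seed t := (hS.seed t).comp (Primrec.pair (.comp .fst .fst) .snd) }
  exact primrecPred_of_fiber
    (P := fun i x => DiagRule (S x.1) p q K fun v =>
      (e.symm (i (Fin.ofNat (K + 1) v))).withCounter (x.2 (Fin.ofNat (K + 1) v) / A))
    fiber fun i => hS'.diagRule _ fun v => Primrec.nat_div.comp (digit _) (.const A)

theorem primrecRel_digitStepRule : PrimrecRel (DigitStepRule e) :=
  primrecPred_of_fiber (φ := fun x : ℕ × ℕ => (Fin.ofNat A x.1, Fin.ofNat A x.2))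
    (P := fun i x => StepRule ((e.symm i.1).withCounter (x.1 / A))
      ((e.symm i.2).withCounter (x.2 / A)))
    (fun i => ((primrecPred_ofNat_eq .fst i.1).and (primrecPred_ofNat_eq .snd i.2)).of_eq
      fun x => (Prod.ext_iff (x := (Fin.ofNat A x.1, Fin.ofNat A x.2))).symm)
    fun i => (primrecPred_const (StepRule (e.symm i.1) (e.symm i.2))).of_eq
      fun _ => ⟨fun ⟨h₁, h₂⟩ => ⟨h₁, h₂⟩, fun ⟨h₁, h₂⟩ => ⟨h₁, h₂⟩⟩

end PrimrecTileSystem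

section StackMachine

variable {α Q κ Γ : Type*} [Primcodable α]

variable [Primcodable Γ] [DecidableEq κ] (M : StackMachine Q κ Γ) (q₀ : Q) (k₀ : κ)
  {l : α → List Γ}

theorem primrecPred_isStart {a : α → Option Γ} (ha : Primrec a) (t : Tile Q κ Γ) :
    PrimrecPred fun x => t.IsStart q₀ k₀ (a x) := by
  refine ((primrecPred_const (t.state = q₀ ∧ ∀ k ≠ k₀, t.cur k = none)).and
    (Primrec.eq.comp (.const (t.cur k₀)) ha)).of_eq fun x => ?_
  exact ⟨fun ⟨⟨state, cur⟩, cur₀⟩ => ⟨state, Function.eq_update_iff.2 ⟨cur₀, cur⟩⟩,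
    fun ⟨state, cur⟩ => ⟨⟨state, (Function.eq_update_iff.1 cur).2⟩,
      (Function.eq_update_iff.1 cur).1⟩⟩

theorem primrecTileSystem_tileSystem (hl : Primrec l) :
    PrimrecTileSystem fun a => M.tileSystem q₀ k₀ (l a) where
  V t t' := by
    have counter : Primrec fun x : α × ℕ × ℕ => x.2.1 := Primrec.fst.comp .snd
    have counter' : Primrec fun x : α × ℕ × ℕ => x.2.2 := Primrec.snd.comp .snd
    exact (primrecPred_const (t.Precedes M t')).and (Primrec.eq.comp counter' counter)
  H t t' := by
    have counter : Primrec fun x : α × ℕ × ℕ => x.2.1 := Primrec.fst.comp .snd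
    have counter' : Primrec fun x : α × ℕ × ℕ => x.2.2 := Primrec.snd.comp .snd
    have input : Primrec fun x : α × ℕ × ℕ => l x.1 := hl.comp .fst
    exact (primrecPred_const (t.Above t')).and
      ((Primrec.eq.comp counter' (Primrec.nat_min.comp (Primrec.succ.comp counter)
        (Primrec.list_length.comp input))).and (primrecPred_const_imp t.isInitial
        (primrecPred_isStart q₀ k₀ (Primrec.list_getElem?.comp input counter) t)))
  seed t := by
    have counter : Primrec fun x : α × ℕ => x.2 := .snd
    exact (primrecPred_const t.isTop).and
      ((primrecPred_const t.isInitial).and (Primrec.eq.comp counter (.const 0)))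

open Encodable

theorem exists_primrec_isImmortal_iff_not_eval_dom [Finite Q] [Finite κ] [Finite Γ]
    (hl : Primrec l) :
    ∃ (n : α → ℕ) (f : ∀ a, Fin (n a + 1) × Fin (n a + 1) × Fin (n a + 1) → Fin (n a + 1)),
      Primrec (fun a => encode (⟨n a, f a⟩ :
        Σ n : ℕ, (Fin (n + 1) × Fin (n + 1) × Fin (n + 1) → Fin (n + 1)))) ∧
      ∀ a, IsSpreading (f a) ∧ ((∃ x, IsImmortal (f a) x) ↔
        ¬ (StateTransition.eval M.step (StackMachine.init q₀ k₀ (l a))).Dom) := by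
  have : Fact (Nat.Prime 5) := ⟨by norm_num⟩
  have : Fact (Nat.Prime 7) := ⟨by norm_num⟩
  obtain ⟨A, ⟨e⟩⟩ := Finite.exists_equiv_fin (Cell 5 7 (Tile Q κ Γ))
  have : NeZero A := ⟨by rintro rfl; exact (e ⟨0, 0, 0, 0, true, true, q₀, fun _ => none,
    fun _ => none, fun _ => none, fun _ => none⟩).elim0⟩
  let S (a : α) := M.tileSystem q₀ k₀ (l a)
  have hS : PrimrecTileSystem S := primrecTileSystem_tileSystem M q₀ k₀ hl
  refine ⟨_, fun a => digitRule (A * ((l a).length + 1)) (DigitDiagRule (K := 14) e (S a))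
    (DigitStepRule e), primrec_encode_digitRule ?_ (hS.digitDiagRule e)
    (primrecRel_digitStepRule e), fun a => ⟨isSpreading_blockRule _ _ _, fun ⟨x, hx⟩ => ?_,
      fun h => ?_⟩⟩
  · exact Primrec.nat_mul.comp (.const A) (Primrec.succ.comp (Primrec.list_length.comp hl))
  · exact not_eval_dom_of_isTiling (exists_isTiling_of_isImmortal e (by decide) (by decide)
      (by decide) (by decide) (by decide) hx)
  · obtain ⟨tile, htile, counter_le⟩ := exists_isTiling_of_not_eval_dom h
    exact exists_isImmortal_of_isTiling e (by decide) (by decide) (by decide) (by decide)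
      (by decide) htile counter_le

end StackMachine

/-! ### The reduction of the halting problem -/

section Halting

open Encodable Turing.PartrecToTM2

theorem primrec_replicate {α σ : Type*} [Primcodable α] [Primcodable σ] {n : α → ℕ}
    (hn : Primrec n) (x : σ) : Primrec fun a => List.replicate (n a) x :=
  (Primrec.list_map (Primrec.list_range.comp hn) (.const x)).of_eq fun a => by
    rw [List.map_const', List.length_range]

theorem exists_primrec_isImmortal_iff_not_halts :
    ∃ (n : Nat.Partrec.Code → ℕ)
      (f : ∀ c, Fin (n c + 1) × Fin (n c + 1) × Fin (n c + 1) → Fin (n c + 1)),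
      Primrec (fun c => encode (⟨n c, f c⟩ :
        Σ n : ℕ, (Fin (n + 1) × Fin (n + 1) × Fin (n + 1) → Fin (n + 1)))) ∧
      ∀ c, IsSpreading (f c) ∧ ((∃ x, IsImmortal (f c) x) ↔ ¬ (c.eval 0).Dom) := by
  obtain ⟨Q, _, M, q₀, hM⟩ := exists_universal_stackMachine
  have : Finite K' := .of_injective (fun k => (k = .main, k = .rev, k = .aux)) fun k k' => by
    cases k <;> cases k' <;> simp
  let _ : Primcodable Γ' := .ofEquiv _ (Fintype.equivFin Γ')
  simp only [← hM]
  exact exists_primrec_isImmortal_iff_not_eval_dom M q₀ K'.main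
    (Primrec.list_append.comp (primrec_replicate .encode _) (.const _))

end Halting

end CellularAutomaton

theorem asymptoticallyNilpotentInDensity_undecidable_general :
    ¬ ∃ g : ℕ → Bool, Computable g ∧
      ∀ (n : ℕ) (f : Fin (n + 1) × Fin (n + 1) × Fin (n + 1) → Fin (n + 1)),
        CellularAutomaton.IsSpreading f →
        (g (Encodable.encode
            (⟨n, f⟩ : Σ n : ℕ, (Fin (n + 1) × Fin (n + 1) × Fin (n + 1) → Fin (n + 1))))
            = true ↔
          (∀ ε : ℝ, 0 < ε → ∃ k : ℕ, ∀ x : ℤ → Fin (n + 1),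
            besicovitchDist ((caOfRule f)^[k] x) (fun _ => 0) < ε)) := by
  rintro ⟨g, hg, decides⟩
  obtain ⟨n, f, primrec_code, hf⟩ := CellularAutomaton.exists_primrec_isImmortal_iff_not_halts
  refine ComputablePred.halting_problem 0 (ComputablePred.computable_iff.2
    ⟨_, hg.comp primrec_code.to_comp, funext fun c => propext ?_⟩)
  obtain ⟨spreading, immortal_iff⟩ := hf c
  rw [decides _ _ spreading, spreading.asymptoticallyNilpotentInDensity_iff, immortal_iff, not_not]

/-- Asymptotic nilpotency in density of cellular automata is
undecidable: there is no total computable function `g` from (the effective encoding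
of) codes `(n, f)` of radius-1 cellular automata to `Bool` such that
`g (n, f) = true` iff `Φ_{n,f}` is asymptotically nilpotent in density. -/
theorem asymptoticallyNilpotentInDensity_undecidable :
    ¬ ∃ g : ℕ → Bool, Computable g ∧
      ∀ (n : ℕ) (f : Fin (n + 1) × Fin (n + 1) × Fin (n + 1) → Fin (n + 1)),
        f (0, 0, 0) = 0 →
        (g (Encodable.encode
            (⟨n, f⟩ : Σ n : ℕ, (Fin (n + 1) × Fin (n + 1) × Fin (n + 1) → Fin (n + 1))))
            = true ↔
          (∀ ε : ℝ, 0 < ε → ∃ k : ℕ, ∀ x : ℤ → Fin (n + 1),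
            besicovitchDist ((caOfRule f)^[k] x) (fun _ => 0) < ε)) :=
  fun ⟨g, hg, decides⟩ => asymptoticallyNilpotentInDensity_undecidable_general
    ⟨g, hg, fun n f hf => decides n f hf.apply_zero⟩
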